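/- If R is a ring over which every cyclic right R-module is automorphism-invariant, then R ≅ S × T where S is semisimple artinian and T_T is square-free; moreover, for any two closed right ideals X, Y of T with X ∩ Y = 0, Hom(X,Y) = 0, and all idempotents of T are central. -/

import Mathlib

universe u v w

section Defs

variable {R : Type u} [Ring R]

/-- `N` is an essential submodule of `M`. -/
def EssentialSub {M : Type v} [AddCommGroup M] [Module R M] (N : Submodule R M) : Prop :=
  ∀ K : Submodule R M, K ⊓ N = ⊥ → K = ⊥

/-- `N` is essential in `P` (both submodules of `M`, `N ≤ P`). -/
def EssentialIn {M : Type v} [AddCommGroup M] [Module R M] (N P : Submodule R M) : Prop :=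
  N ≤ P ∧ ∀ K : Submodule R M, K ≤ P → K ⊓ N = ⊥ → K = ⊥

/-- `N` is a closed submodule of `M`: it has no proper essential extension in `M`. -/
def ClosedSub {M : Type v} [AddCommGroup M] [Module R M] (N : Submodule R M) : Prop :=
  ∀ P : Submodule R M, EssentialIn N P → N = P

/-- `i : M →ₗ[R] E` realizes `E` as an injective hull of `M`. -/
structure IsInjectiveHull {M : Type v} {E : Type w} [AddCommGroup M] [Module R M]
    [AddCommGroup E] [Module R E] (i : M →ₗ[R] E) : Prop where
  inj : Function.Injective i
  injE : Module.Injective R E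
  ess : EssentialSub (LinearMap.range i)

/-- `M` is invariant under every automorphism of the hull `E` given by `i`. -/
def HullAutInv {M : Type v} {E : Type w} [AddCommGroup M] [Module R M]
    [AddCommGroup E] [Module R E] (i : M →ₗ[R] E) : Prop :=
  ∀ g : E ≃ₗ[R] E, ∀ m : M, g (i m) ∈ LinearMap.range i

end Defs

/-- `M` is automorphism-invariant: invariant under all automorphisms of its injective hull. -/
def AutInvariant (R : Type u) [Ring R] (M : Type v) [AddCommGroup M] [Module R M] : Prop :=
  ∀ (E : Type v) [AddCommGroup E] [Module R E] (i : M →ₗ[R] E),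
    IsInjectiveHull i → HullAutInv i

/-- Every monomorphism from a submodule of `M` into `M` extends to an endomorphism of `M`. -/
def PseudoInjective (R : Type u) [Ring R] (M : Type v) [AddCommGroup M] [Module R M] : Prop :=
  ∀ (A : Submodule R M) (f : A →ₗ[R] M), Function.Injective f →
    ∃ g : M →ₗ[R] M, ∀ a : A, g a = f a

/-- Every homomorphism from a submodule of `M` into `M` extends to an endomorphism of `M`. -/
def QuasiInjective (R : Type u) [Ring R] (M : Type v) [AddCommGroup M] [Module R M] : Prop :=
  ∀ (A : Submodule R M) (f : A →ₗ[R] M), ∃ g : M →ₗ[R] M, ∀ a : A, g a = f a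

/-- `X` is `Y`-injective. -/
def RelInjective (R : Type u) [Ring R] (X : Type v) (Y : Type w) [AddCommGroup X] [Module R X]
    [AddCommGroup Y] [Module R Y] : Prop :=
  ∀ (A : Submodule R Y) (f : A →ₗ[R] X), ∃ g : Y →ₗ[R] X, ∀ a : A, g a = f a

/-- `M` contains no direct sum of two nonzero isomorphic submodules. -/
def SquareFreeMod (R : Type u) [Ring R] (M : Type v) [AddCommGroup M] [Module R M] : Prop :=
  ∀ (A B : Submodule R M), A ⊓ B = ⊥ → Nonempty (A ≃ₗ[R] B) → A = ⊥

/-- `X` and `Y` have no nonzero isomorphic submodules. -/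
def OrthogonalMod (R : Type u) [Ring R] (X : Type v) (Y : Type w) [AddCommGroup X] [Module R X]
    [AddCommGroup Y] [Module R Y] : Prop :=
  ∀ (A : Submodule R X) (B : Submodule R Y), Nonempty (A ≃ₗ[R] B) → A = ⊥

/-- No nonzero element of `M` is annihilated by an essential (right) ideal of `R`. -/
def NonsingularMod (R : Type u) [Ring R] (M : Type v) [AddCommGroup M] [Module R M] : Prop :=
  ∀ m : M, EssentialSub (LinearMap.ker (LinearMap.toSpanSingleton R M m)) → m = 0

/-!
If `n` is an endomorphism of the injective hull of `M` with `n * n = 0`, then `1 + n` is an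
automorphism; so an automorphism-invariant `M` is stable under all such `n`. In particular, when
`X × Y` is automorphism-invariant, `X` and `Y` are injective relative to each other, and every
embedding of a square `L × L` into `M` is realised by endomorphisms `p`, `q` of `M` that behave like
the matrix units `e₁₂`, `e₂₁`.

Over a ring with automorphism-invariant cyclic modules, a maximal square in the regular module
gives such a pair with `ker p ⊓ ker q` square-free. Every quotient of `range p` is injective
relative to the ring, and Osofsky's argument then forces `range p` to be semisimple. Adding the
images of `range p` in the square-free part gives a decomposition of the ring into a semisimple
and a square-free summand with no nonzero homomorphisms in either direction, hence a product of
rings.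

In a square-free automorphism-invariant module, endomorphisms are identified when they agree on an
essential submodule; up to this identification idempotents are central and every endomorphism is an
automorphism times an idempotent, which rules out quotients of the form `U × U` with `U` simple.
A nonzero homomorphism between independent submodules would produce a square in some quotient, and
the matrix units of that square would give exactly such a `U × U`.
-/

/-! ### Essential submodules -/

section Essential

variable {R : Type u} [Ring R] {M : Type v} {M' : Type w} [AddCommGroup M] [Module R M]
  [AddCommGroup M'] [Module R M']

theorem EssentialSub.eq_bot {N K : Submodule R M} (hN : EssentialSub N) (h : Disjoint K N) :
    K = ⊥ :=
  hN K h.eq_bot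

theorem essentialSub_iff {N : Submodule R M} :
    EssentialSub N ↔ ∀ x : M, x ≠ 0 → ∃ r : R, r • x ≠ 0 ∧ r • x ∈ N := by
  refine ⟨fun h x hx ↦ ?_, fun h K hK ↦ K.eq_bot_iff.2 fun x hx ↦ ?_⟩
  · by_contra! hc
    refine hx (Submodule.span_singleton_eq_bot.1 (h.eq_bot ?_))
    refine Submodule.disjoint_def.2 fun y hy ↦ ?_
    obtain ⟨r, rfl⟩ := Submodule.mem_span_singleton.1 hy
    exact not_imp_not.1 (hc r)
  · by_contra hx0
    obtain ⟨r, hr, hrN⟩ := h x hx0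
    exact hr ((Submodule.eq_bot_iff _).1 hK _ ⟨K.smul_mem r hx, hrN⟩)

theorem essentialSub_top : EssentialSub (⊤ : Submodule R M) :=
  fun K hK ↦ by rwa [inf_top_eq] at hK

theorem EssentialSub.mono {N P : Submodule R M} (hN : EssentialSub N) (h : N ≤ P) :
    EssentialSub P :=
  fun _ hK ↦ hN.eq_bot ((disjoint_iff.2 hK).mono_right h)

theorem EssentialSub.inf {N P : Submodule R M} (hN : EssentialSub N) (hP : EssentialSub P) :
    EssentialSub (N ⊓ P) :=
  fun K hK ↦ hN K (hP _ (by rwa [inf_assoc]))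

theorem EssentialSub.comap {N : Submodule R M'} (hN : EssentialSub N) (f : M →ₗ[R] M') :
    EssentialSub (N.comap f) := by
  rw [essentialSub_iff] at hN ⊢
  intro x hx
  by_cases hfx : f x = 0
  · exact ⟨1, by rwa [one_smul], by simp [hfx]⟩
  · obtain ⟨r, hr, hrN⟩ := hN _ hfx
    exact ⟨r, fun h ↦ hr (by rw [← map_smul, h, map_zero]), by simpa using hrN⟩

theorem EssentialSub.map {N : Submodule R M} (hN : EssentialSub N) {i : M →ₗ[R] M'}
    (hi : Function.Injective i) (hi' : EssentialSub (LinearMap.range i)) :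
    EssentialSub (N.map i) := by
  refine fun K hK ↦ hi'.eq_bot (Submodule.disjoint_def.2 ?_)
  have hcomap : K.comap i = ⊥ := hN.eq_bot (Submodule.disjoint_def.2 fun x hxK hxN ↦
    hi (((Submodule.eq_bot_iff _).1 hK _ ⟨hxK, x, hxN, rfl⟩).trans (map_zero i).symm))
  rintro _ hxK ⟨x, rfl⟩
  rw [(Submodule.eq_bot_iff _).1 hcomap x hxK, map_zero]

theorem EssentialSub.range_comp {L : Type*} [AddCommGroup L] [Module R L] {k : L →ₗ[R] M}
    (hk : EssentialSub (LinearMap.range k)) {i : M →ₗ[R] M'} (hi : Function.Injective i)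
    (hi' : EssentialSub (LinearMap.range i)) : EssentialSub (LinearMap.range (i ∘ₗ k)) := by
  rw [LinearMap.range_comp]
  exact hk.map hi hi'

theorem EssentialSub.injective {N : Submodule R M} (hN : EssentialSub N) {f : M →ₗ[R] M'}
    (h : Disjoint N (LinearMap.ker f)) : Function.Injective f :=
  LinearMap.ker_eq_bot.1 (hN.eq_bot h.symm)

theorem EssentialSub.injective_of_comp {L : Type*} [AddCommGroup L] [Module R L] {k : L →ₗ[R] M}
    (hk : EssentialSub (LinearMap.range k)) {f : M →ₗ[R] M'}
    (h : Function.Injective (f ∘ₗ k)) : Function.Injective f := by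
  refine hk.injective (Submodule.disjoint_def.2 ?_)
  rintro _ ⟨x, rfl⟩ hx
  rw [h (hx.trans (map_zero (f ∘ₗ k)).symm), map_zero]

theorem EssentialSub.prod {N : Submodule R M} {N' : Submodule R M'} (hN : EssentialSub N)
    (hN' : EssentialSub N') : EssentialSub (N.prod N') :=
  (hN.comap (LinearMap.fst R M M')).inf (hN'.comap (LinearMap.snd R M M'))

theorem exists_maximal_disjoint {N C : Submodule R M} (h : Disjoint N C) :
    ∃ D, C ≤ D ∧ Maximal (Disjoint N) D :=
  zorn_le_nonempty₀ {D | Disjoint N D} (fun c hc hchain _ _ ↦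
    ⟨sSup c, hchain.directedOn.disjoint_sSup_right.2 fun _ hD ↦ hc hD, fun _ ↦ le_sSup⟩) C h

theorem essentialSub_sup_of_maximal_disjoint {N C : Submodule R M} (hC : Maximal (Disjoint N) C) :
    EssentialSub (N ⊔ C) := by
  intro K hK
  have hKC : K ≤ C := le_sup_right.trans
    (hC.2 (hC.1.disjoint_sup_right_of_disjoint_sup_left (disjoint_iff.2 hK).symm) le_sup_left)
  rwa [inf_eq_left.2 (hKC.trans le_sup_right)] at hK

end Essential

/-! ### Injective hulls -/

section InjectiveHull

variable {R : Type u} [Ring R] {E Q : Type u} [AddCommGroup E] [Module R E] [AddCommGroup Q]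
  [Module R Q]

theorem injective_of_retract [Module.Injective R Q] (i : E →ₗ[R] Q) (r : Q →ₗ[R] E)
    (h : r ∘ₗ i = LinearMap.id) : Module.Injective R E where
  out X Y _ _ _ _ f hf g := by
    obtain ⟨k, hk⟩ := Module.Injective.out f hf (i ∘ₗ g)
    exact ⟨r ∘ₗ k, fun x ↦ by simpa [hk] using LinearMap.congr_fun h (g x)⟩

theorem injective_of_linearEquiv [Module.Injective R Q] (e : Q ≃ₗ[R] E) : Module.Injective R E :=
  injective_of_retract e.symm.toLinearMap e.toLinearMap (by simp)

theorem injective_prod [Module.Injective R E] [Module.Injective R Q] :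
    Module.Injective R (E × Q) where
  out X Y _ _ _ _ f hf g := by
    obtain ⟨k, hk⟩ := Module.Injective.out f hf (LinearMap.fst R E Q ∘ₗ g)
    obtain ⟨l, hl⟩ := Module.Injective.out f hf (LinearMap.snd R E Q ∘ₗ g)
    exact ⟨k.prod l, fun x ↦ by simp [hk, hl]⟩

theorem exists_leftInverse_of_injective [Module.Injective R E] {i : E →ₗ[R] Q}
    (hi : Function.Injective i) : ∃ r : Q →ₗ[R] E, r ∘ₗ i = LinearMap.id :=
  Module.Injective.extension_property R _ _ _ i hi LinearMap.id

theorem EssentialSub.surjective [Module.Injective R E] {i : E →ₗ[R] Q}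
    (hi : Function.Injective i) (hess : EssentialSub (LinearMap.range i)) :
    Function.Surjective i := by
  obtain ⟨r, hr⟩ := exists_leftInverse_of_injective hi
  have hr_inj : Function.Injective r :=
    hess.injective_of_comp (by rw [hr]; exact Function.injective_id)
  exact fun y ↦ ⟨r y, hr_inj (LinearMap.congr_fun hr (r y))⟩

theorem exists_injective_embedding (R : Type u) [Ring R] (M : Type u) [AddCommGroup M]
    [Module R M] :
    ∃ (Q : Type u) (_ : AddCommGroup Q) (_ : Module R Q) (i : M →ₗ[R] Q),
      Function.Injective i ∧ Module.Injective R Q := by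
  obtain ⟨J⟩ := (inferInstance : CategoryTheory.EnoughInjectives (ModuleCat.{u} R)).presentation
    (ModuleCat.of R M)
  exact ⟨J.J, inferInstance, inferInstance, J.f.hom, (ModuleCat.mono_iff_injective J.f).1 J.mono,
    (Module.injective_iff_injective_object R J.J).2 J.injective⟩

theorem essentialSub_range_mkQ_comp_subtype {E C : Submodule R Q}
    (hC : Maximal (Disjoint E) C) : EssentialSub (LinearMap.range (C.mkQ ∘ₗ E.subtype)) := by
  intro K hK
  have hdisj : Disjoint E (K.comap C.mkQ) := Submodule.disjoint_def.2 fun x hxE hxK ↦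
    Submodule.disjoint_def.1 hC.1 x hxE <| (Submodule.Quotient.mk_eq_zero C).1 <|
      (Submodule.eq_bot_iff _).1 hK _ ⟨hxK, ⟨x, hxE⟩, rfl⟩
  have hle : K.comap C.mkQ ≤ C := hC.2 hdisj (C.le_comap_mkQ K)
  rw [← Submodule.map_comap_eq_of_surjective C.mkQ_surjective K, eq_bot_iff,
    ← Submodule.mkQ_map_self C]
  exact Submodule.map_mono hle

theorem injective_of_maximal_disjoint [Module.Injective R Q] {E C : Submodule R Q}
    (hC : Maximal (Disjoint E) C) (hE : Maximal (Disjoint C) E) : Module.Injective R E := by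
  let j : E →ₗ[R] Q ⧸ C := C.mkQ ∘ₗ E.subtype
  have hj_ess : EssentialSub (LinearMap.range j) := essentialSub_range_mkQ_comp_subtype hC
  have hj : Function.Injective j :=
    LinearMap.ker_eq_bot.1 (by simpa [j, LinearMap.ker_comp] using
      Submodule.disjoint_iff_comap_eq_bot.1 hC.1)
  obtain ⟨g, hg⟩ := Module.Injective.extension_property R _ _ _ j hj E.subtype
  have hE_le : E ≤ LinearMap.range g := by
    simpa [hg] using LinearMap.range_comp_le_range j g
  have hcomap : C.comap g = ⊥ := hj_ess.eq_bot (Submodule.disjoint_def.2 (by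
    rintro _ hxC ⟨x, rfl⟩
    have hgx : g (j x) = x := LinearMap.congr_fun hg x
    have hx : x = 0 := Subtype.ext (Submodule.disjoint_def.1 hC.1 _ x.2 (hgx ▸ hxC))
    rw [hx, map_zero]))
  have hdisj : Disjoint C (LinearMap.range g) := Submodule.disjoint_def.2 (by
    rintro _ hxC ⟨x, rfl⟩
    rw [(Submodule.eq_bot_iff _).1 hcomap x hxC, map_zero])
  exact injective_of_retract E.subtype
    (LinearMap.codRestrict E (g ∘ₗ C.mkQ) fun x ↦ hE.2 hdisj hE_le ⟨_, rfl⟩)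
    (LinearMap.ext fun x ↦ Subtype.ext (LinearMap.congr_fun hg x))

theorem essentialSub_comap_subtype {N C E : Submodule R Q} (hC : Maximal (Disjoint N) C)
    (hNE : N ≤ E) (hCE : Disjoint C E) : EssentialSub (N.comap E.subtype) := by
  refine ((essentialSub_sup_of_maximal_disjoint hC).comap E.subtype).mono fun x hx ↦ ?_
  have hmodular : (N ⊔ C) ⊓ E ≤ N := by
    rw [sup_inf_assoc_of_le C hNE, hCE.eq_bot, sup_bot_eq]
  exact hmodular ⟨hx, x.2⟩

theorem exists_isInjectiveHull (R : Type u) [Ring R] (M : Type u) [AddCommGroup M] [Module R M] :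
    ∃ (E : Type u) (_ : AddCommGroup E) (_ : Module R E) (i : M →ₗ[R] E), IsInjectiveHull i := by
  obtain ⟨Q, _, _, i, hi, _⟩ := exists_injective_embedding R M
  obtain ⟨C, -, hC⟩ := exists_maximal_disjoint (disjoint_bot_right (a := LinearMap.range i))
  obtain ⟨E, hiE, hE⟩ := exists_maximal_disjoint hC.1.symm
  have hCE : Maximal (Disjoint E) C :=
    ⟨hE.1.symm, fun D hD hCD ↦ hC.2 (hD.mono_left hiE) hCD⟩
  refine ⟨E, inferInstance, inferInstance, i.codRestrict E fun x ↦ hiE ⟨x, rfl⟩,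
    (LinearMap.injective_codRestrict_iff ..).2 hi, injective_of_maximal_disjoint hCE hE, ?_⟩
  rw [LinearMap.range_codRestrict]
  exact essentialSub_comap_subtype hC hiE hE.1

theorem IsInjectiveHull.prodMap {M N : Type u} [AddCommGroup M] [Module R M] [AddCommGroup N]
    [Module R N] {i : M →ₗ[R] E} {k : N →ₗ[R] Q} (hi : IsInjectiveHull i)
    (hk : IsInjectiveHull k) : IsInjectiveHull (i.prodMap k) where
  inj := hi.inj.prodMap hk.inj
  injE :=
    have := hi.injE
    have := hk.injE
    injective_prod
  ess := by
    rw [LinearMap.range_prodMap]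
    exact hi.ess.prod hk.ess

end InjectiveHull

/-! ### Automorphism-invariant modules -/

section AutInvariant

variable {R : Type u} [Ring R] {M E : Type u} [AddCommGroup M] [Module R M] [AddCommGroup E]
  [Module R E]

theorem exists_comp_eq_of_forall_mem_range {L : Type*} [AddCommGroup L] [Module R L]
    {i : M →ₗ[R] E} (hi : Function.Injective i) (f : L →ₗ[R] E)
    (hf : ∀ x, f x ∈ LinearMap.range i) : ∃ p : L →ₗ[R] M, i ∘ₗ p = f :=
  ⟨(LinearEquiv.ofInjective i hi).symm ∘ₗ f.codRestrict _ hf, LinearMap.ext fun x ↦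
    congrArg Subtype.val ((LinearEquiv.ofInjective i hi).apply_symm_apply ⟨f x, hf x⟩)⟩

theorem AutInvariant.exists_lift_of_sq_eq_zero (hM : AutInvariant R M) {i : M →ₗ[R] E}
    (hi : IsInjectiveHull i) {n : E →ₗ[R] E} (hn : n ∘ₗ n = 0) :
    ∃ p : M →ₗ[R] M, i ∘ₗ p = n ∘ₗ i := by
  let g : E ≃ₗ[R] E := LinearEquiv.ofLinearMap (LinearMap.id + n) (LinearMap.id - n)
    (by simp [LinearMap.add_comp, LinearMap.comp_sub, hn])
    (by simp [LinearMap.sub_comp, LinearMap.comp_add, hn])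
  refine exists_comp_eq_of_forall_mem_range hi.inj _ fun m ↦ ?_
  have hgm : i m + n (i m) ∈ LinearMap.range i := hM E i hi g m
  exact (Submodule.add_mem_iff_right _ (LinearMap.mem_range_self i m)).1 hgm

theorem exists_linearEquiv_of_injective {P : Type u} [AddCommGroup P] [Module R P]
    {k φ : P →ₗ[R] E} [Module.Injective R E] (hk : Function.Injective k)
    (hφ : Function.Injective φ) (hk' : EssentialSub (LinearMap.range k))
    (hφ' : EssentialSub (LinearMap.range φ)) :
    ∃ g : E ≃ₗ[R] E, g.toLinearMap ∘ₗ k = φ := by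
  obtain ⟨g, hg⟩ := Module.Injective.extension_property R _ _ _ k hk φ
  have hg_inj : Function.Injective g := hk'.injective_of_comp (by rwa [hg])
  have hg_ess : EssentialSub (LinearMap.range g) :=
    hφ'.mono (hg ▸ LinearMap.range_comp_le_range k g)
  exact ⟨LinearEquiv.ofBijective g ⟨hg_inj, hg_ess.surjective hg_inj⟩, hg⟩

theorem AutInvariant.exists_linearEquiv (hM : AutInvariant R M) {P : Type u} [AddCommGroup P]
    [Module R P] {k φ : P →ₗ[R] M} (hk : Function.Injective k) (hφ : Function.Injective φ)
    (hk' : EssentialSub (LinearMap.range k)) (hφ' : EssentialSub (LinearMap.range φ)) :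
    ∃ ψ : M ≃ₗ[R] M, ψ.toLinearMap ∘ₗ k = φ := by
  obtain ⟨E, _, _, i, hi⟩ := exists_isInjectiveHull R M
  have := hi.injE
  obtain ⟨g, hg⟩ := exists_linearEquiv_of_injective (hi.inj.comp hk : Function.Injective (i ∘ₗ k))
    (hi.inj.comp hφ : Function.Injective (i ∘ₗ φ))
    (hk'.range_comp hi.inj hi.ess) (hφ'.range_comp hi.inj hi.ess)
  obtain ⟨ψ, hψ⟩ := exists_comp_eq_of_forall_mem_range hi.inj (g.toLinearMap ∘ₗ i) (hM E i hi g)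
  obtain ⟨ψ', hψ'⟩ :=
    exists_comp_eq_of_forall_mem_range hi.inj (g.symm.toLinearMap ∘ₗ i) (hM E i hi g.symm)
  have hψ_apply : ∀ x, i (ψ x) = g (i x) := LinearMap.congr_fun hψ
  have hψ'_apply : ∀ x, i (ψ' x) = g.symm (i x) := LinearMap.congr_fun hψ'
  refine ⟨LinearEquiv.ofLinearMap ψ ψ' (LinearMap.ext fun x ↦ hi.inj ?_)
    (LinearMap.ext fun x ↦ hi.inj ?_), LinearMap.ext fun x ↦ hi.inj ?_⟩
  · simp [hψ_apply, hψ'_apply]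
  · simp [hψ_apply, hψ'_apply]
  · exact (hψ_apply (k x)).trans (LinearMap.congr_fun hg x)

end AutInvariant

/-! ### Squares and matrix units -/

section MatrixUnits

theorem injective_coprod_iff {R : Type u} [Ring R] {M L L' : Type*} [AddCommGroup M] [Module R M]
    [AddCommGroup L] [Module R L] [AddCommGroup L'] [Module R L'] {f : L →ₗ[R] M} {g : L' →ₗ[R] M} :
    Function.Injective (f.coprod g) ↔ ∀ a b, f a + g b = 0 → a = 0 ∧ b = 0 := by
  simp [injective_iff_map_eq_zero]

theorem squareFreeMod_iff {R : Type u} [Ring R] {M : Type v} [AddCommGroup M] [Module R M] :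
    SquareFreeMod R M ↔ ∀ (L : Type v) [AddCommGroup L] [Module R L] (f g : L →ₗ[R] M),
      Function.Injective (f.coprod g) → Subsingleton L := by
  refine ⟨fun h L _ _ f g hfg ↦ ?_, fun h A B hAB ⟨φ⟩ ↦ ?_⟩
  · have hker := injective_coprod_iff.1 hfg
    have hf : Function.Injective f :=
      (injective_iff_map_eq_zero f).2 fun a ha ↦ (hker a 0 (by simp [ha])).1
    have hg : Function.Injective g :=
      (injective_iff_map_eq_zero g).2 fun b hb ↦ (hker 0 b (by simp [hb])).2
    have hdisj : LinearMap.range f ⊓ LinearMap.range g = ⊥ := by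
      rw [Submodule.eq_bot_iff]
      rintro _ ⟨⟨a, rfl⟩, b, hb⟩
      rw [(hker a (-b) (by simp [hb])).1, map_zero]
    have hrange := h _ _ hdisj
      ⟨(LinearEquiv.ofInjective f hf).symm ≪≫ₗ LinearEquiv.ofInjective g hg⟩
    exact ⟨fun x y ↦ hf (by simp [LinearMap.range_eq_bot.1 hrange])⟩
  · have hA : Subsingleton A :=
      h A A.subtype (B.subtype ∘ₗ φ.toLinearMap) (injective_coprod_iff.2 fun a b hab ↦ by
        have hab' : (a : M) = -(φ b : M) := eq_neg_of_add_eq_zero_left hab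
        have ha : a = 0 := Subtype.ext <|
          (Submodule.eq_bot_iff _).1 hAB _ ⟨a.2, hab' ▸ B.neg_mem (φ b).2⟩
        exact ⟨ha, by simpa [ha] using hab⟩)
    exact Submodule.eq_bot_of_subsingleton

variable {R : Type u} [Ring R] {M L : Type u} [AddCommGroup M] [Module R M] [AddCommGroup L]
  [Module R L]

/-- `p` and `q` behave like the matrix units `e₁₂` and `e₂₁`: they exchange the complementary
summands `range p` and `range q` of a direct summand of `M` and vanish on the rest. -/
structure IsMatrixUnitPair (p q : M →ₗ[R] M) : Prop where
  left_sq (x : M) : p (p x) = 0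
  right_sq (x : M) : q (q x) = 0
  left_right_left (x : M) : p (q (p x)) = p x
  right_left_right (x : M) : q (p (q x)) = q x

theorem AutInvariant.exists_isMatrixUnitPair (hM : AutInvariant R M) (f g : L →ₗ[R] M)
    (h : Function.Injective (f.coprod g)) :
    ∃ p q : M →ₗ[R] M, IsMatrixUnitPair p q ∧ q ∘ₗ f = g ∧ p ∘ₗ g = f := by
  obtain ⟨E, _, _, i, hi⟩ := exists_isInjectiveHull R M
  obtain ⟨EL, _, _, k, hk⟩ := exists_isInjectiveHull R L
  have := hi.injE
  have hkk := hk.prodMap hk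
  have := hkk.injE
  obtain ⟨j, hj⟩ := Module.Injective.extension_property R _ _ _ (k.prodMap k) hkk.inj
    (i ∘ₗ f.coprod g)
  have hj_inj : Function.Injective j :=
    hkk.ess.injective_of_comp (by rw [hj]; exact hi.inj.comp h)
  obtain ⟨ρ, hρ⟩ := exists_leftInverse_of_injective hj_inj
  have hρj (x : EL × EL) : ρ (j x) = x := LinearMap.congr_fun hρ x
  have hj_zero : j (0, 0) = 0 := map_zero j
  let P : E →ₗ[R] E := j ∘ₗ LinearMap.inl R EL EL ∘ₗ LinearMap.snd R EL EL ∘ₗ ρ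
  let Q : E →ₗ[R] E := j ∘ₗ LinearMap.inr R EL EL ∘ₗ LinearMap.fst R EL EL ∘ₗ ρ
  obtain ⟨p, hp⟩ := hM.exists_lift_of_sq_eq_zero hi (n := P)
    (LinearMap.ext fun x ↦ by simp [P, hρj, hj_zero])
  obtain ⟨q, hq⟩ := hM.exists_lift_of_sq_eq_zero hi (n := Q)
    (LinearMap.ext fun x ↦ by simp [Q, hρj, hj_zero])
  have hp_apply (x : M) : i (p x) = j ((ρ (i x)).2, 0) := LinearMap.congr_fun hp x
  have hq_apply (x : M) : i (q x) = j (0, (ρ (i x)).1) := LinearMap.congr_fun hq x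
  have hf_apply (a : L) : i (f a) = j (k a, 0) := by
    simpa using (LinearMap.congr_fun hj (a, 0)).symm
  have hg_apply (a : L) : i (g a) = j (0, k a) := by
    simpa using (LinearMap.congr_fun hj (0, a)).symm
  refine ⟨p, q, ⟨fun x ↦ hi.inj ?_, fun x ↦ hi.inj ?_, fun x ↦ hi.inj ?_, fun x ↦ hi.inj ?_⟩,
    LinearMap.ext fun a ↦ hi.inj ?_, LinearMap.ext fun a ↦ hi.inj ?_⟩
  all_goals simp [hp_apply, hq_apply, hρj, hf_apply, hg_apply, hj_zero]

/-- `G ≤ M × M` is the graph of an isomorphism between two submodules of `M` with trivial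
intersection. -/
def IsSquareGraph (G : Submodule R (M × M)) : Prop :=
  ∀ g ∈ G, ∀ h ∈ G, g.1 + h.2 = 0 → g = 0 ∧ h = 0

theorem exists_maximal_isSquareGraph (R M : Type u) [Ring R] [AddCommGroup M] [Module R M] :
    ∃ G : Submodule R (M × M), Maximal IsSquareGraph G := by
  obtain ⟨G, -, hG⟩ := zorn_le_nonempty₀ {G : Submodule R (M × M) | IsSquareGraph G}
    (fun c hc hchain y hy ↦ ⟨sSup c, fun g hg h hh hgh ↦ by
      rw [Submodule.mem_sSup_of_directed ⟨y, hy⟩ hchain.directedOn] at hg hh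
      obtain ⟨G, hGc, hg⟩ := hg
      obtain ⟨H, hHc, hh⟩ := hh
      obtain ⟨K, hKc, hGK, hHK⟩ := hchain.directedOn G hGc H hHc
      exact hc hKc g (hGK hg) h (hHK hh) hgh, fun _ ↦ le_sSup⟩) ⊥
    (fun g hg h hh _ ↦ ⟨hg, hh⟩)
  exact ⟨G, hG⟩

theorem IsSquareGraph.sup_range {p q : M →ₗ[R] M} (hpq : IsMatrixUnitPair p q)
    {f g : L →ₗ[R] M} (hfg : Function.Injective (f.coprod g))
    (hpf : p ∘ₗ f = 0) (hpg : p ∘ₗ g = 0) (hqf : q ∘ₗ f = 0) (hqg : q ∘ₗ g = 0) :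
    IsSquareGraph (LinearMap.range ((p ∘ₗ q).prod q) ⊔ LinearMap.range (f.prod g)) := by
  simp only [LinearMap.ext_iff, LinearMap.comp_apply, LinearMap.zero_apply] at hpf hpg hqf hqg
  intro x hx y hy hxy
  obtain ⟨_, ⟨z, rfl⟩, _, ⟨a, rfl⟩, rfl⟩ := Submodule.mem_sup.1 hx
  obtain ⟨_, ⟨w, rfl⟩, _, ⟨b, rfl⟩, rfl⟩ := Submodule.mem_sup.1 hy
  replace hxy : p (q z) + f a + (q w + g b) = 0 := hxy
  have hqw : q w = 0 := by
    simpa [hpq.left_sq, hpf, hpg, hpq.right_left_right] using congrArg (fun x ↦ q (p x)) hxy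
  have hqz : q z = 0 := by
    simpa [hpq.right_sq, hqf, hqg, hpq.right_left_right] using congrArg q hxy
  have hab : a = 0 ∧ b = 0 := injective_coprod_iff.1 hfg a b (by simpa [hqw, hqz] using hxy)
  simp [hqw, hqz, hab]

theorem AutInvariant.exists_isMatrixUnitPair_squareFreeMod (hM : AutInvariant R M) :
    ∃ p q : M →ₗ[R] M, IsMatrixUnitPair p q ∧
      SquareFreeMod R ↥(LinearMap.ker p ⊓ LinearMap.ker q) := by
  obtain ⟨G, hG⟩ := exists_maximal_isSquareGraph R M
  obtain ⟨p, q, hpq, hq, hp⟩ := hM.exists_isMatrixUnitPair (LinearMap.fst R M M ∘ₗ G.subtype)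
    (LinearMap.snd R M M ∘ₗ G.subtype)
    (injective_coprod_iff.2 fun g h hgh ↦ by simpa using hG.1 g g.2 h h.2 hgh)
  refine ⟨p, q, hpq, squareFreeMod_iff.2 fun L _ _ f g hfg ↦ ?_⟩
  let N := LinearMap.ker p ⊓ LinearMap.ker q
  have hq_apply : ∀ x ∈ G, q x.1 = x.2 := fun x hx ↦ LinearMap.congr_fun hq ⟨x, hx⟩
  have hp_apply : ∀ x ∈ G, p x.2 = x.1 := fun x hx ↦ LinearMap.congr_fun hp ⟨x, hx⟩
  have hG_le : G ≤ LinearMap.range ((p ∘ₗ q).prod q) := fun x hx ↦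
    ⟨x.1, Prod.ext (by simp [hq_apply x hx, hp_apply x hx]) (hq_apply x hx)⟩
  have hrange_le : LinearMap.range ((N.subtype ∘ₗ f).prod (N.subtype ∘ₗ g)) ≤ G :=
    le_sup_right.trans <| hG.2 (IsSquareGraph.sup_range hpq
      (by rw [← LinearMap.comp_coprod]; exact N.injective_subtype.comp hfg)
      (LinearMap.ext fun x ↦ (f x).2.1) (LinearMap.ext fun x ↦ (g x).2.1)
      (LinearMap.ext fun x ↦ (f x).2.2) (LinearMap.ext fun x ↦ (g x).2.2))
      (hG_le.trans le_sup_left)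
  refine subsingleton_of_forall_eq 0 fun a ↦ ?_
  have hga : g a = 0 := Subtype.ext <|
    (hq_apply _ (hrange_le ⟨a, rfl⟩)).symm.trans (f a).2.2
  exact (injective_coprod_iff.1 hfg 0 a (by simp [hga])).2

end MatrixUnits

/-! ### Relative injectivity -/

section RelInjective

variable {R : Type u} [Ring R] {M Q X Y : Type u} [AddCommGroup M] [Module R M] [AddCommGroup Q]
  [Module R Q] [AddCommGroup X] [Module R X] [AddCommGroup Y] [Module R Y]

theorem AutInvariant.relInjective (h : AutInvariant R (X × Y)) : RelInjective R X Y := by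
  intro A f
  obtain ⟨EX, _, _, iX, hiX⟩ := exists_isInjectiveHull R X
  obtain ⟨EY, _, _, iY, hiY⟩ := exists_isInjectiveHull R Y
  have := hiX.injE
  obtain ⟨F, hF⟩ := Module.Injective.extension_property R _ _ _ (iY ∘ₗ A.subtype)
    (hiY.inj.comp A.injective_subtype) (iX ∘ₗ f)
  obtain ⟨p, hp⟩ := h.exists_lift_of_sq_eq_zero (hiX.prodMap hiY)
    (n := LinearMap.inl R EX EY ∘ₗ F ∘ₗ LinearMap.snd R EX EY)
    (LinearMap.ext fun x ↦ Prod.ext (map_zero F) rfl)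
  refine ⟨LinearMap.fst R X Y ∘ₗ p ∘ₗ LinearMap.inr R X Y, fun a ↦ hiX.inj ?_⟩
  exact (congrArg Prod.fst (LinearMap.congr_fun hp (0, (a : Y)))).trans (LinearMap.congr_fun hF a)

theorem RelInjective.exists_le_linearPMap {N : Submodule R M} (h : RelInjective R Q N)
    (f : M →ₗ.[R] Q) : ∃ F, f ≤ F ∧ N ≤ F.domain := by
  obtain ⟨g, hg⟩ := h (f.domain.comap N.subtype)
    (f.toFun ∘ₗ N.subtype.restrict fun _ hx ↦ hx)
  have hfg (x : f.domain) (y : N) (hxy : (x : M) = y) : f x = g y := by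
    have hgy := hg ⟨y, show (y : M) ∈ f.domain from hxy ▸ x.2⟩
    rw [hgy]
    exact congrArg f (Subtype.ext hxy)
  exact ⟨f.sup ⟨N, g⟩ hfg, f.left_le_sup _ hfg, le_sup_right⟩

theorem RelInjective.of_sup_eq_top {N₁ N₂ : Submodule R M} (h₁ : RelInjective R Q N₁)
    (h₂ : RelInjective R Q N₂) (hN : N₁ ⊔ N₂ = ⊤) : RelInjective R Q M := by
  intro A f
  obtain ⟨F, hfF, hF⟩ := h₁.exists_le_linearPMap ⟨A, f⟩
  obtain ⟨G, hFG, hG⟩ := h₂.exists_le_linearPMap F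
  have hdomain : G.domain = ⊤ := top_le_iff.1 (hN ▸ sup_le (hF.trans hFG.1) hG)
  exact ⟨G.toFun ∘ₗ (LinearEquiv.ofTop _ hdomain).symm.toLinearMap,
    fun a ↦ ((hfF.trans hFG).2 (x := a) rfl).symm⟩

theorem RelInjective.injective (h : RelInjective R Q R) : Module.Injective R Q :=
  Module.Baer.injective fun I g ↦
    (h I g).imp fun _ hg x hx ↦ hg ⟨x, hx⟩

end RelInjective

section QuotientsAutInvariant

variable {R : Type u} [Ring R] {M Q X Y : Type u} [AddCommGroup M] [Module R M] [AddCommGroup Q]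
  [Module R Q] [AddCommGroup X] [Module R X] [AddCommGroup Y] [Module R Y]

/-- Every homomorphic image of `M` is automorphism-invariant. For `M = R` this is the hypothesis
that all cyclic modules are automorphism-invariant. -/
def QuotientsAutInvariant (R : Type u) [Ring R] (M : Type u) [AddCommGroup M] [Module R M] :
    Prop :=
  ∀ (Q : Type u) [AddCommGroup Q] [Module R Q] (s : M →ₗ[R] Q),
    Function.Surjective s → AutInvariant R Q

theorem QuotientsAutInvariant.autInvariant (h : QuotientsAutInvariant R M) : AutInvariant R M :=
  h M LinearMap.id Function.surjective_id

theorem QuotientsAutInvariant.of_surjective (h : QuotientsAutInvariant R M) (s : M →ₗ[R] Q)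
    (hs : Function.Surjective s) : QuotientsAutInvariant R Q :=
  fun Q' _ _ s' hs' ↦ h Q' (s' ∘ₗ s) (hs'.comp hs)

theorem QuotientsAutInvariant.relInjective (h : QuotientsAutInvariant R M) (f : M →ₗ[R] X)
    (g : M →ₗ[R] Y) (hfg : ∀ x y, ∃ m, f m = x ∧ g m = y) : RelInjective R X Y :=
  (h (X × Y) (f.prod g) fun (x, y) ↦
    (hfg x y).imp fun _ ⟨hx, hy⟩ ↦ Prod.ext hx hy).relInjective

theorem QuotientsAutInvariant.relInjective_of_surjective (h : QuotientsAutInvariant R M)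
    {p q : M →ₗ[R] M} (hpq : IsMatrixUnitPair p q) (t : LinearMap.range p →ₗ[R] Q)
    (ht : Function.Surjective t) : RelInjective R Q M := by
  let f : M →ₗ[R] Q := t ∘ₗ p.rangeRestrict ∘ₗ q
  have hf (x : M) (hx : p (q x) = 0) : f x = 0 := by
    rw [← map_zero t]
    exact congrArg t (Subtype.ext hx)
  have hfp (x : M) : f (p x) = t (p.rangeRestrict x) :=
    congrArg t (Subtype.ext (hpq.left_right_left x))
  let c : M →ₗ[R] LinearMap.ker (p ∘ₗ q) := (LinearMap.id - p ∘ₗ q).codRestrict _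
    fun x ↦ by simp [hpq.right_left_right]
  have hrange : RelInjective R Q (LinearMap.range p) := by
    refine h.relInjective f p.rangeRestrict fun y z ↦ ?_
    obtain ⟨⟨_, x, rfl⟩, rfl⟩ := ht y
    obtain ⟨_, b, rfl⟩ := z
    refine ⟨p x + q (p b), ?_, Subtype.ext ?_⟩
    · rw [map_add, hfp, hf (q (p b)) (by simp [hpq.right_sq]), add_zero]
      rfl
    · simp [hpq.left_sq, hpq.left_right_left]
  have hker : RelInjective R Q (LinearMap.ker (p ∘ₗ q)) := by
    refine h.relInjective f c fun y k ↦ ?_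
    obtain ⟨⟨_, x, rfl⟩, rfl⟩ := ht y
    have hk : p (q k) = 0 := k.2
    refine ⟨p x + k, ?_, Subtype.ext ?_⟩
    · rw [map_add, hfp, hf k hk, add_zero]
      rfl
    · simp [c, hpq.left_right_left]
  refine hrange.of_sup_eq_top hker (eq_top_iff.2 fun x _ ↦ ?_)
  exact Submodule.mem_sup.2 ⟨p (q x), ⟨q x, rfl⟩, c x, (c x).2, by simp [c]⟩

theorem QuotientsAutInvariant.injective_of_surjective (h : QuotientsAutInvariant R R)
    {p q : R →ₗ[R] R} (hpq : IsMatrixUnitPair p q) (t : LinearMap.range p →ₗ[R] Q)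
    (ht : Function.Surjective t) : Module.Injective R Q :=
  (h.relInjective_of_surjective hpq t ht).injective

theorem QuotientsAutInvariant.injective_range (h : QuotientsAutInvariant R R) {p q : R →ₗ[R] R}
    (hpq : IsMatrixUnitPair p q) (ρ : R →ₗ[R] LinearMap.range p)
    (hρ : ∀ x, ∃ y, p y = 0 ∧ ρ y = ρ x) : Module.Injective R (LinearMap.range ρ) := by
  have hrel : RelInjective R (LinearMap.range ρ) (LinearMap.range p) := by
    refine h.relInjective ρ.rangeRestrict p.rangeRestrict ?_
    rintro ⟨_, x, rfl⟩ ⟨_, b, rfl⟩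
    obtain ⟨y, hy, hyx⟩ := hρ (x - q (p b))
    refine ⟨y + q (p b), Subtype.ext ?_, Subtype.ext ?_⟩
    · simp [hyx]
    · simp [hy, hpq.left_right_left]
  obtain ⟨g, hg⟩ := hrel (LinearMap.range ρ) LinearMap.id
  exact h.injective_of_surjective hpq g fun y ↦ ⟨y, hg y⟩

theorem QuotientsAutInvariant.exists_injective_le (h : QuotientsAutInvariant R R)
    {p q : R →ₗ[R] R} (hpq : IsMatrixUnitPair p q) {N : Submodule R (LinearMap.range p)}
    (hN : N ≠ ⊥) : ∃ S ≤ N, S ≠ ⊥ ∧ Module.Injective R S := by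
  obtain ⟨a, haN, ha⟩ := Submodule.exists_mem_ne_zero_of_ne_bot hN
  let ρ : R →ₗ[R] LinearMap.range p := LinearMap.toSpanSingleton R _ a
  by_contra! hcon
  have hzero (β : R →ₗ[R] R) (hβ : ∀ x, ∃ y, p y = 0 ∧ β y = β x) : ρ ∘ₗ β = 0 := by
    by_contra hne
    refine hcon (LinearMap.range (ρ ∘ₗ β)) ?_ (by rwa [Ne, LinearMap.range_eq_bot])
      (h.injective_range hpq _ fun x ↦ (hβ x).imp fun _ hy ↦ ⟨hy.1, congrArg ρ hy.2⟩)
    rintro _ ⟨x, rfl⟩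
    exact N.smul_mem _ haN
  let c : R →ₗ[R] R := LinearMap.id - p ∘ₗ q - q ∘ₗ p
  have hp : ρ ∘ₗ (p ∘ₗ q) = 0 :=
    hzero _ fun x ↦ ⟨p (q x), hpq.left_sq _, by simp [hpq.left_right_left]⟩
  have hq : ρ ∘ₗ q = 0 := hzero _ fun x ↦ ⟨p (q x), hpq.left_sq _, hpq.right_left_right x⟩
  have hc : ρ ∘ₗ c = 0 := hzero _ fun x ↦ ⟨c x,
    by simp [c, hpq.left_sq, hpq.left_right_left],
    by simp [c, hpq.left_sq, hpq.right_sq, hpq.left_right_left, hpq.right_left_right]⟩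
  have hρ : ρ = ρ ∘ₗ (p ∘ₗ q) + (ρ ∘ₗ q) ∘ₗ p + ρ ∘ₗ c := by
    ext
    simp [c]
  rw [hp, hq, hc] at hρ
  exact ha (by simpa [ρ] using LinearMap.congr_fun hρ 1)

end QuotientsAutInvariant

/-! ### Osofsky's argument -/

section Osofsky

variable {R : Type u} [Ring R] {P : Type u} [AddCommGroup P] [Module R P]

/-- The module `P` is `𝒦`-nonsingular in the sense of Rizvi and Roman: a nonzero endomorphism
never has an essential kernel. -/
def KNonsingular (R : Type u) [Ring R] (P : Type v) [AddCommGroup P] [Module R P] : Prop :=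
  ∀ f : P →ₗ[R] P, EssentialSub (LinearMap.ker f) → f = 0

theorem KNonsingular.eq_of_le_eqLocus (hP : KNonsingular R P) {N : Submodule R P}
    (hN : EssentialSub N) {f g : P →ₗ[R] P} (h : N ≤ LinearMap.eqLocus f g) : f = g :=
  sub_eq_zero.1 (hP _ (hN.mono (h.trans (LinearMap.eqLocus_eq_ker_sub f g).le)))

theorem kNonsingular_of_exists_injective_le [Module.Projective R P]
    (h : ∀ N : Submodule R P, N ≠ ⊥ → ∃ S ≤ N, S ≠ ⊥ ∧ Module.Injective R S) :
    KNonsingular R P := by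
  intro f hf
  by_contra hne
  obtain ⟨S, hS, hS_ne, _⟩ := h (LinearMap.range f) (LinearMap.range_eq_bot.not.2 hne)
  obtain ⟨r, hr⟩ := exists_leftInverse_of_injective S.injective_subtype
  obtain ⟨σ, hσ⟩ := Module.projective_lifting_property f.rangeRestrict
    (Submodule.inclusion hS ∘ₗ r) f.surjective_rangeRestrict
  have hfσ (s : P) (hs : s ∈ S) : f (σ s) = s := by
    have hrs : r s = ⟨s, hs⟩ := LinearMap.congr_fun hr ⟨s, hs⟩
    exact (congrArg Subtype.val (LinearMap.congr_fun hσ s)).trans (congrArg Subtype.val hrs)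
  have hmap : S.map σ = ⊥ := hf.eq_bot (Submodule.disjoint_def.2 (by
    rintro _ ⟨s, hs, rfl⟩ hker
    rw [← hfσ s hs, LinearMap.mem_ker.1 hker, map_zero]))
  refine hS_ne ((Submodule.eq_bot_iff _).2 fun s hs ↦ ?_)
  rw [← hfσ s hs, (Submodule.eq_bot_iff _).1 hmap _ ⟨s, hs, rfl⟩, map_zero]

theorem exists_linearMap_of_iSupIndep {ι : Type v} {Q : Type u} [AddCommGroup Q] [Module R Q]
    [Module.Injective R Q] {p : ι → Submodule R P} (hp : iSupIndep p) {C : Submodule R P}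
    (hC : Disjoint (⨆ n, p n) C) (g : ∀ n, p n →ₗ[R] Q) :
    ∃ f : P →ₗ[R] Q, (∀ n (y : p n), f y = g n y) ∧ C ≤ LinearMap.ker f := by
  classical
  let k : (Π₀ n, p n) →ₗ[R] P := DFinsupp.lsum ℕ fun n ↦ (p n).subtype
  have hk : Function.Injective (k.coprod C.subtype) := by
    refine injective_coprod_iff.2 fun z c hzc ↦ ?_
    have hz : k z ∈ ⨆ n, p n := by
      rw [Submodule.iSup_eq_range_dfinsupp_lsum]
      exact ⟨z, rfl⟩
    have hc : (c : P) = 0 := Submodule.disjoint_def.1 hC _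
      (eq_neg_of_add_eq_zero_right (b := (c : P)) hzc ▸ neg_mem hz) c.2
    rw [C.subtype_apply, hc, add_zero] at hzc
    exact ⟨hp.dfinsupp_lsum_injective (hzc.trans (map_zero k).symm), Subtype.ext hc⟩
  obtain ⟨f, hf⟩ := Module.Injective.extension_property R _ _ _ _ hk
    ((DFinsupp.lsum ℕ g).coprod 0)
  refine ⟨f, fun n y ↦ ?_, fun c hc ↦ ?_⟩
  · simpa [k] using LinearMap.congr_fun hf (DFinsupp.single n y, 0)
  · simpa using LinearMap.congr_fun hf (0, ⟨c, hc⟩)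

/-- Endomorphisms `proj A`, one for each set `A` of indices, that behave like the projections of a
product onto its partial products, the family `p` playing the role of the factors. -/
structure SupportProjections {ι : Type v} (p : ι → Submodule R P) where
  proj : Set ι → P →ₗ[R] P
  proj_of_mem {A : Set ι} {n : ι} (hn : n ∈ A) {y : P} (hy : y ∈ p n) : proj A y = y
  proj_of_notMem {A : Set ι} {n : ι} (hn : n ∉ A) {y : P} (hy : y ∈ p n) : proj A y = 0
  proj_proj (A B : Set ι) (y : P) : proj A (proj B y) = proj (A ∩ B) y
  proj_mem_iSup {A : Set ι} (hA : A.Finite) (y : P) : proj A y ∈ ⨆ n, p n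

theorem exists_supportProjections [Module.Injective R P] (hP : KNonsingular R P) {ι : Type v}
    {p : ι → Submodule R P} (hp : iSupIndep p) (hinj : ∀ n, Module.Injective R (p n)) :
    Nonempty (SupportProjections p) := by
  classical
  obtain ⟨C, -, hC⟩ := exists_maximal_disjoint (disjoint_bot_right (a := ⨆ n, p n))
  have hext {f g : P →ₗ[R] P} (hfg : ∀ n, ∀ y ∈ p n, f y = g y) (hf : ∀ y ∈ C, f y = 0)
      (hg : ∀ y ∈ C, g y = 0) : f = g :=
    hP.eq_of_le_eqLocus (essentialSub_sup_of_maximal_disjoint hC)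
      (sup_le (iSup_le hfg) fun y hy ↦ (hf y hy).trans (hg y hy).symm)
  choose E hE hEC using fun A : Set ι ↦ exists_linearMap_of_iSupIndep hp hC.1
    fun n ↦ if n ∈ A then (p n).subtype else 0
  choose e he heC using fun n ↦ exists_linearMap_of_iSupIndep hp hC.1
    fun m ↦ (LinearMap.proj n ∘ₗ LinearMap.single R (fun m ↦ p m) m : p m →ₗ[R] p n)
  have hE_mem {A : Set ι} {n : ι} (hn : n ∈ A) {y : P} (hy : y ∈ p n) : E A y = y := by
    simpa [hn] using hE A n ⟨y, hy⟩
  have hE_notMem {A : Set ι} {n : ι} (hn : n ∉ A) {y : P} (hy : y ∈ p n) : E A y = 0 := by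
    simpa [hn] using hE A n ⟨y, hy⟩
  refine ⟨E, hE_mem, hE_notMem, fun A B ↦ LinearMap.congr_fun (f := E A ∘ₗ E B) (hext ?_ ?_ ?_),
    fun {A} hA ↦ ?_⟩
  · intro n y hy
    by_cases hB : n ∈ B
    · by_cases hA : n ∈ A
      · simp [hE_mem hB hy, hE_mem hA hy, hE_mem (A := A ∩ B) ⟨hA, hB⟩ hy]
      · simp [hE_mem hB hy, hE_notMem hA hy, hE_notMem (A := A ∩ B) (fun h ↦ hA h.1) hy]
    · simp [hE_notMem hB hy, hE_notMem (A := A ∩ B) (fun h ↦ hB h.2) hy]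
  · exact fun y hy ↦ by simp [LinearMap.mem_ker.1 (hEC B hy)]
  · exact fun y hy ↦ hEC _ hy
  · have hsum : E A = ∑ n ∈ hA.toFinset, (p n).subtype ∘ₗ e n := by
      refine hext (fun m y hy ↦ ?_) (fun y hy ↦ hEC A hy) fun y hy ↦ ?_
      · have hval (n : ι) : (e n y : P) = if m = n then y else 0 := by
          rw [show e n y = _ from he n m ⟨y, hy⟩]
          split_ifs with h
          · subst h; simp
          · simp [Ne.symm h]
        by_cases hm : m ∈ A
        · simp [hval, hm, hE_mem hm hy]
        · simp [hval, hm, hE_notMem hm hy]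
      · simp [fun n ↦ LinearMap.mem_ker.1 (heC n hy)]
    intro y
    rw [hsum, LinearMap.sum_apply]
    exact Submodule.sum_mem _ fun n _ ↦ Submodule.mem_iSup_of_mem n (e n y).2

theorem SupportProjections.proj_mem_iSup_of_mem {ι : Type v} {p : ι → Submodule R P}
    (E : SupportProjections p) (A : Set ι) {y : P} (hy : y ∈ ⨆ n, p n) :
    E.proj A y ∈ ⨆ n, p n := by
  suffices h : ⨆ n, p n ≤ (⨆ n, p n).comap (E.proj A) from h hy
  refine iSup_le fun n z hz ↦ ?_
  by_cases hn : n ∈ A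
  · rw [Submodule.mem_comap, E.proj_of_mem hn hz]
    exact Submodule.mem_iSup_of_mem n hz
  · rw [Submodule.mem_comap, E.proj_of_notMem hn hz]
    exact zero_mem _

theorem SupportProjections.finite_support {ι : Type v} {p : ι → Submodule R P}
    (E : SupportProjections p) {y : P} (hy : y ∈ ⨆ n, p n) : {n | E.proj {n} y ≠ 0}.Finite := by
  induction hy using Submodule.iSup_induction' with
  | mem m y hy =>
    refine (Set.finite_singleton m).subset fun n hn ↦ ?_
    by_contra hnm
    exact hn (E.proj_of_notMem (fun h ↦ hnm (Set.mem_singleton_iff.1 h).symm) hy)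
  | zero => simp
  | add a b _ _ ha hb =>
    refine (ha.union hb).subset fun n hn ↦ ?_
    by_contra! hc
    simp only [Set.mem_union, Set.mem_ofPred_eq, not_or, not_not] at hc
    exact hn (by rw [map_add, hc.1, hc.2, add_zero])

theorem SupportProjections.exists_proj_apply_eq_zero {ι : Type v} {p : ι → Submodule R P}
    (E : SupportProjections p) {w : P} (hw : Submodule.span R {w} = ⊤) {A : Set ι}
    (hA : A.Infinite) {f : P →ₗ[R] P} (hf : f (E.proj A w) ∈ ⨆ n, p n) :
    ∃ n ∈ A, ∀ y ∈ p n, E.proj {n} (f y) = 0 := by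
  obtain ⟨n, hnA, hn⟩ := hA.exists_notMem_finite (E.finite_support hf)
  have hzero : E.proj {n} ∘ₗ f ∘ₗ E.proj A = 0 := LinearMap.ext_on hw (by simpa using hn)
  refine ⟨n, hnA, fun y hy ↦ ?_⟩
  simpa [E.proj_of_mem hnA hy] using LinearMap.congr_fun hzero y

theorem SupportProjections.mem_iSup_of_add_mem_iSup {ι : Type v} {p : ι → Submodule R P}
    (E : SupportProjections p) {𝒜 ℬ : Set (Set ι)} [Nonempty 𝒜] (h𝒜 : DirectedOn (· ⊆ ·) 𝒜)
    (hfin : ∀ A ∈ 𝒜, ∀ B ∈ ℬ, (A ∩ B).Finite) {x y : P}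
    (hx : x ∈ ⨆ A : 𝒜, LinearMap.range (E.proj A)) (hy : y ∈ ⨆ B : ℬ, LinearMap.range (E.proj B))
    (hxy : x + y ∈ ⨆ n, p n) : x ∈ ⨆ n, p n ∧ y ∈ ⨆ n, p n := by
  suffices h : x ∈ ⨆ n, p n from ⟨h, (add_mem_cancel_left h).1 hxy⟩
  have hmono : Monotone fun A : Set ι ↦ LinearMap.range (E.proj A) := by
    rintro A B hAB _ ⟨z, rfl⟩
    exact ⟨E.proj A z, by rw [E.proj_proj, Set.inter_eq_right.2 hAB]⟩
  obtain ⟨⟨A, hA⟩, z, rfl⟩ := (Submodule.mem_iSup_of_directed _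
    (h𝒜.directed_val.mono_comp _ hmono)).1 hx
  have hAy : E.proj A y ∈ ⨆ n, p n := by
    suffices h : ⨆ B : ℬ, LinearMap.range (E.proj B) ≤ (⨆ n, p n).comap (E.proj A) from h hy
    refine iSup_le fun B ↦ ?_
    rintro _ ⟨z, rfl⟩
    rw [Submodule.mem_comap, E.proj_proj]
    exact E.proj_mem_iSup (hfin A hA B B.2) z
  have hAxy := E.proj_mem_iSup_of_mem A hxy
  rw [map_add, E.proj_proj, Set.inter_self] at hAxy
  exact (add_mem_cancel_right hAy).1 hAxy

theorem exists_sub_mem_and_mem [Module.Projective R P] {I : Submodule R P}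
    [Module.Injective R (P ⧸ I)] {S₁ S₂ : Submodule R P}
    (h : ∀ x ∈ S₁, ∀ y ∈ S₂, x + y ∈ I → x ∈ I ∧ y ∈ I) :
    ∃ f : P →ₗ[R] P, (∀ x ∈ S₁, f x - x ∈ I) ∧ ∀ y ∈ S₂, f y ∈ I := by
  have hinj : Function.Injective ((S₁.map I.mkQ).subtype.coprod (S₂.map I.mkQ).subtype) := by
    rw [injective_coprod_iff]
    rintro ⟨_, x, hx, rfl⟩ ⟨_, y, hy, rfl⟩ hxy
    obtain ⟨hxI, hyI⟩ := h x hx y hy ((Submodule.Quotient.mk_eq_zero I).1 hxy)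
    exact ⟨Subtype.ext ((Submodule.Quotient.mk_eq_zero I).2 hxI),
      Subtype.ext ((Submodule.Quotient.mk_eq_zero I).2 hyI)⟩
  obtain ⟨g, hg⟩ := Module.Injective.extension_property R _ _ _ _ hinj
    ((S₁.map I.mkQ).subtype ∘ₗ LinearMap.fst R _ _)
  obtain ⟨f, hf⟩ := Module.projective_lifting_property I.mkQ (g ∘ₗ I.mkQ) I.mkQ_surjective
  refine ⟨f, fun x hx ↦ (Submodule.Quotient.eq I).1 ?_,
    fun y hy ↦ (Submodule.Quotient.mk_eq_zero I).1 ?_⟩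
  · refine (LinearMap.congr_fun hf x).trans ?_
    simpa using LinearMap.congr_fun hg (⟨I.mkQ x, x, hx, rfl⟩, 0)
  · refine (LinearMap.congr_fun hf y).trans ?_
    simpa using LinearMap.congr_fun hg (0, ⟨I.mkQ y, y, hy, rfl⟩)

theorem SupportProjections.exists_eq_bot [Module.Projective R P] {w : P}
    (hw : Submodule.span R {w} = ⊤) {p : ℕ × ℕ → Submodule R P} (E : SupportProjections p)
    [Module.Injective R (P ⧸ ⨆ n, p n)] : ∃ n, p n = ⊥ := by
  -- Modulo `⨆ n, p n`, let `f` be the identity on the parts of `P` supported on finitely many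
  -- columns and zero on those supported on partial transversals. Then `f` fixes some `p n` in each
  -- column, and these indices form a transversal, so that `f` must also kill one of them.
  let 𝒜 : Set (Set (ℕ × ℕ)) := {A | (A.image Prod.fst).Finite}
  let ℬ : Set (Set (ℕ × ℕ)) := {B | Set.InjOn Prod.fst B}
  have : Nonempty 𝒜 := ⟨∅, by simp [𝒜]⟩
  have hdir : DirectedOn (· ⊆ ·) 𝒜 := fun A hA A' hA' ↦ ⟨A ∪ A', by
    simpa [𝒜, Set.image_union] using ⟨hA, hA'⟩, Set.subset_union_left, Set.subset_union_right⟩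
  have hfin : ∀ A ∈ 𝒜, ∀ B ∈ ℬ, (A ∩ B).Finite := fun A hA B hB ↦
    Set.Finite.of_finite_image (Set.Finite.subset hA (Set.image_mono Set.inter_subset_left))
      (hB.mono Set.inter_subset_right)
  obtain ⟨f, hf𝒜, hfℬ⟩ := exists_sub_mem_and_mem fun x hx y hy ↦
    E.mem_iSup_of_add_mem_iSup hdir hfin hx hy
  have hcolumn (i : ℕ) : ∃ n : ℕ × ℕ, n.1 = i ∧ ∀ y ∈ p n, E.proj {n} (f y) = y := by
    have hA : {n : ℕ × ℕ | n.1 = i} ∈ 𝒜 :=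
      (Set.finite_singleton i).subset (by rintro _ ⟨n, rfl, rfl⟩; rfl)
    have hA_inf : {n : ℕ × ℕ | n.1 = i}.Infinite :=
      (Set.infinite_range_of_injective (Prod.mk_right_injective i)).mono
        (by rintro _ ⟨j, rfl⟩; rfl)
    obtain ⟨n, hn, hy⟩ := E.exists_proj_apply_eq_zero hw hA_inf (f := f - LinearMap.id)
      (hf𝒜 _ (Submodule.mem_iSup_of_mem ⟨_, hA⟩ ⟨w, rfl⟩))
    refine ⟨n, hn, fun y hyn ↦ sub_eq_zero.1 ?_⟩
    simpa [E.proj_of_mem (Set.mem_singleton n) hyn] using hy y hyn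
  choose N hN_fst hN using hcolumn
  have hN_inj : Function.Injective N := Function.LeftInverse.injective hN_fst
  have hB : Set.range N ∈ ℬ := by
    rintro _ ⟨i, rfl⟩ _ ⟨j, rfl⟩ hij
    rw [← hN_fst i, hij, hN_fst]
  obtain ⟨_, ⟨i, rfl⟩, hi⟩ := E.exists_proj_apply_eq_zero hw
    (Set.infinite_range_of_injective hN_inj)
    (hfℬ _ (Submodule.mem_iSup_of_mem ⟨_, hB⟩ ⟨w, rfl⟩))
  exact ⟨N i, (Submodule.eq_bot_iff _).2 fun y hy ↦ by rw [← hN i y hy, hi y hy]⟩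

theorem finite_of_iSupIndep_of_injective [Module.Projective R P] (hP : KNonsingular R P) {w : P}
    (hw : Submodule.span R {w} = ⊤) (hquot : ∀ N : Submodule R P, Module.Injective R (P ⧸ N))
    {ι : Type v} {p : ι → Submodule R P} (hp : iSupIndep p) (hne : ∀ n, p n ≠ ⊥)
    (hinj : ∀ n, Module.Injective R (p n)) : Finite ι := by
  by_contra hinf
  rw [not_finite_iff_infinite] at hinf
  let em : ℕ × ℕ → ι := Infinite.natEmbedding ι ∘ Nat.pairEquiv
  have hem : Function.Injective em :=
    (Infinite.natEmbedding ι).injective.comp Nat.pairEquiv.injective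
  have := hquot ⊥
  have : Module.Injective R P := injective_of_linearEquiv (Submodule.quotEquivOfEqBot ⊥ rfl)
  obtain ⟨E⟩ := exists_supportProjections hP (hp.comp hem) fun n ↦ hinj (em n)
  have := hquot (⨆ n, p (em n))
  obtain ⟨n, hn⟩ := E.exists_eq_bot hw
  exact hne _ hn

theorem injective_sup {S T : Submodule R P} (h : Disjoint S T) [Module.Injective R S]
    [Module.Injective R T] : Module.Injective R ↥(S ⊔ T) := by
  have hinj : Function.Injective (S.subtype.coprod T.subtype) := by
    rw [← LinearMap.ker_eq_bot, LinearMap.ker_coprod_of_disjoint_range] <;> simp [h]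
  have := injective_prod (R := R) (E := S) (Q := T)
  have hrange : LinearMap.range (S.subtype.coprod T.subtype) = S ⊔ T := by
    simp [LinearMap.range_coprod]
  exact hrange ▸ injective_of_linearEquiv (LinearEquiv.ofInjective _ hinj)

theorem injective_sSup {s : Set (Submodule R P)} (hs : s.Finite) (hind : sSupIndep s)
    (hinj : ∀ S ∈ s, Module.Injective R S) : Module.Injective R ↥(sSup s) := by
  induction s, hs using Set.Finite.induction_on with
  | empty =>
    rw [sSup_empty]
    exact ⟨fun _ _ _ _ _ _ _ _ _ ↦ ⟨0, fun _ ↦ Subsingleton.elim _ _⟩⟩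
  | @insert S s hS _ ih =>
    have hdisj : Disjoint S (sSup s) := by
      simpa [Set.insert_sdiff_self_of_notMem hS] using hind (Set.mem_insert S s)
    have := hinj S (Set.mem_insert _ _)
    have := ih (hind.mono (Set.subset_insert _ _)) fun T hT ↦ hinj T (Set.mem_insert_of_mem _ hT)
    rw [sSup_insert]
    exact injective_sup hdisj

theorem sSupIndep_insert_of_disjoint {α : Type*} [CompleteLattice α] [IsModularLattice α]
    {s : Set α} (hs : sSupIndep s) {a : α} (ha : Disjoint a (sSup s)) :
    sSupIndep (insert a s) := by
  intro b hb
  by_cases hba : b = a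
  · subst hba
    exact ha.mono_right (sSup_le_sSup (by simp))
  · have hbs : b ∈ s := hb.resolve_left hba
    have hdisj : Disjoint b (sSup (s \ {b}) ⊔ a) :=
      (hs hbs).disjoint_sup_right_of_disjoint_sup_left
        (ha.mono_right (sup_le (le_sSup hbs) (sSup_le_sSup Set.sdiff_subset))).symm
    refine hdisj.mono_right (sSup_le fun c hc ↦ ?_)
    obtain ⟨rfl | hcs, hcb⟩ := hc
    · exact le_sup_right
    · exact (le_sSup (Set.mem_sdiff_of_mem hcs hcb)).trans le_sup_left

theorem isSemisimpleModule_of_injective_quotients [Module.Projective R P] {w : P}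
    (hw : Submodule.span R {w} = ⊤) (hquot : ∀ N : Submodule R P, Module.Injective R (P ⧸ N))
    (hsub : ∀ N : Submodule R P, N ≠ ⊥ → ∃ S ≤ N, S ≠ ⊥ ∧ Module.Injective R S) :
    IsSemisimpleModule R P := by
  refine (isSemisimpleModule_iff R P).2 ⟨fun N ↦ ?_⟩
  obtain ⟨s, ⟨hind, hs⟩, hmax⟩ := zorn_subset
    {s : Set (Submodule R P) | sSupIndep s ∧ ∀ S ∈ s, S ≤ N ∧ S ≠ ⊥ ∧ Module.Injective R S}
    fun c hc hchain ↦ ⟨⋃₀ c, ⟨iSupIndep_sUnion_of_directed hchain.directedOn fun t ht ↦ (hc ht).1,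
      fun S ⟨t, ht, hS⟩ ↦ (hc ht).2 S hS⟩, fun _ ↦ Set.subset_sUnion_of_mem⟩
  have hfin : Finite s := finite_of_iSupIndep_of_injective
    (kNonsingular_of_exists_injective_le hsub) hw hquot ((sSupIndep_iff s).1 hind)
    (fun S ↦ (hs S S.2).2.1) fun S ↦ (hs S S.2).2.2
  have := injective_sSup (Set.toFinite s) hind fun S hS ↦ (hs S hS).2.2
  obtain ⟨r, hr⟩ := exists_leftInverse_of_injective (sSup s).injective_subtype
  have hcompl : IsCompl (sSup s) (LinearMap.ker r) :=
    LinearMap.isCompl_of_proj fun x ↦ LinearMap.congr_fun hr x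
  refine ⟨LinearMap.ker r, ?_⟩
  suffices hN : Disjoint N (LinearMap.ker r) from
    ⟨hN, hcompl.codisjoint.mono_left (sSup_le fun S hS ↦ (hs S hS).1)⟩
  by_contra hne
  obtain ⟨T, hT, hT_ne, hT_inj⟩ := hsub _ (disjoint_iff.not.1 hne)
  have hdisj : Disjoint T (sSup s) := hcompl.disjoint.symm.mono_left (hT.trans inf_le_right)
  have hTs : T ∈ s := hmax ⟨sSupIndep_insert_of_disjoint hind hdisj, Set.forall_mem_insert.2
    ⟨⟨hT.trans inf_le_left, hT_ne, hT_inj⟩, hs⟩⟩ (Set.subset_insert T s) (Set.mem_insert T s)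
  exact hT_ne (disjoint_self.1 (hdisj.mono_right (le_sSup hTs)))

end Osofsky

/-! ### Splitting off the semisimple factor -/

section Splitting

theorem isCompl_sup_of_disjoint {α : Type*} [Lattice α] [BoundedOrder α] [IsModularLattice α]
    {a b c : α} (habc : IsCompl a (b ⊔ c)) (hbc : Disjoint b c) : IsCompl (a ⊔ b) c :=
  ⟨hbc.disjoint_sup_left_of_disjoint_sup_right habc.disjoint,
    codisjoint_iff.2 (by rw [sup_assoc, habc.sup_eq_top])⟩

variable {R : Type u} [Ring R] {A C M : Type u} [AddCommGroup A] [Module R A] [AddCommGroup C]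
  [Module R C] [AddCommGroup M] [Module R M]

theorem SquareFreeMod.of_injective (hM : SquareFreeMod R M) (i : C →ₗ[R] M)
    (hi : Function.Injective i) : SquareFreeMod R C :=
  squareFreeMod_iff.2 fun L _ _ f g hfg ↦ squareFreeMod_iff.1 hM L (i ∘ₗ f) (i ∘ₗ g) <| by
    rw [← LinearMap.comp_coprod]
    exact hi.comp hfg

theorem projective_of_isCompl [Module.Projective R M] {N K : Submodule R M} (h : IsCompl N K) :
    Module.Projective R N :=
  Module.Projective.of_split N.subtype (N.projectionOnto K h)
    (LinearMap.ext fun x ↦ Submodule.projectionOnto_apply_left h x)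

theorem hom_eq_zero_of_symm [IsSemisimpleModule R A] [Module.Projective R A]
    (h : ∀ f : A →ₗ[R] M, f = 0) (f : M →ₗ[R] A) : f = 0 := by
  obtain ⟨K, hK⟩ := exists_isCompl (LinearMap.range f)
  let e : A →ₗ[R] LinearMap.range f := (LinearMap.range f).projectionOnto K hK
  have he (z : LinearMap.range f) : e z = z := Submodule.projectionOnto_apply_left hK z
  have := projective_of_isCompl hK
  obtain ⟨g, hg⟩ := Module.projective_lifting_property f.rangeRestrict LinearMap.id
    f.surjective_rangeRestrict
  have hg_zero (z : LinearMap.range f) : g z = 0 := by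
    simpa [he] using LinearMap.congr_fun (h (g ∘ₗ e)) z
  refine LinearMap.range_eq_bot.1 ((Submodule.eq_bot_iff _).2 fun z hz ↦ ?_)
  have hfg : f (g ⟨z, hz⟩) = z := congrArg Subtype.val (LinearMap.congr_fun hg ⟨z, hz⟩)
  rw [← hfg, hg_zero, map_zero]

theorem SquareFreeMod.exists_hom_forall_disjoint [IsSemisimpleModule R A] [IsArtinian R A]
    (hC : SquareFreeMod R C) :
    ∃ h : A →ₗ[R] C, ∀ f : A →ₗ[R] C,
      Disjoint (LinearMap.range h) (LinearMap.range f) → f = 0 := by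
  obtain ⟨_, ⟨h, rfl⟩, hmin⟩ := IsArtinian.set_has_minimal
    (Set.range (LinearMap.ker : (A →ₗ[R] C) → Submodule R A)) ⟨_, 0, rfl⟩
  refine ⟨h, fun f hf ↦ ?_⟩
  have hdisj {a b : A} (hab : h a + f b = 0) : h a = 0 ∧ f b = 0 := by
    have ha : h a = 0 := Submodule.disjoint_def.1 hf _ ⟨a, rfl⟩
      (eq_neg_of_add_eq_zero_left hab ▸ neg_mem ⟨b, rfl⟩)
    exact ⟨ha, by simpa [ha] using hab⟩
  have hker : LinearMap.ker h ≤ LinearMap.ker f := by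
    obtain ⟨K, hK⟩ := exists_isCompl (LinearMap.ker h)
    let e : A →ₗ[R] A := (LinearMap.ker h).subtype ∘ₗ (LinearMap.ker h).projectionOnto K hK
    have hle : LinearMap.ker (h + f ∘ₗ e) ≤ LinearMap.ker h ⊓ LinearMap.ker f := fun a ha ↦ by
      obtain ⟨hha, hfe⟩ := hdisj ha
      have hea : e a = a :=
        congrArg Subtype.val (Submodule.projectionOnto_apply_left hK ⟨a, hha⟩)
      exact ⟨hha, by rwa [hea] at hfe⟩
    have heq := eq_of_le_of_not_lt (hle.trans inf_le_left) (hmin _ ⟨_, rfl⟩)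
    exact heq ▸ hle.trans inf_le_right
  obtain ⟨L, hL⟩ := exists_isCompl (LinearMap.ker f)
  have hfL (l : L) (hl : f l = 0) : l = 0 :=
    Subtype.ext (Submodule.disjoint_def.1 hL.disjoint l hl l.2)
  have : Subsingleton L := squareFreeMod_iff.1 hC L (h ∘ₗ L.subtype) (f ∘ₗ L.subtype)
    (injective_coprod_iff.2 fun a b hab ↦
      have h' := hdisj hab
      ⟨hfL a (hker h'.1), hfL b h'.2⟩)
  rw [← LinearMap.ker_eq_top, ← hL.sup_eq_top, Submodule.eq_bot_of_subsingleton (p := L),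
    sup_bot_eq]

theorem SquareFreeMod.exists_isCompl_range [IsSemisimpleModule R A] [IsArtinian R A]
    (hC : SquareFreeMod R C)
    (hA : ∀ d : A →ₗ[R] C, Module.Injective R (LinearMap.range d)) :
    ∃ (d : A →ₗ[R] C) (K : Submodule R C),
      IsCompl (LinearMap.range d) K ∧ ∀ f : A →ₗ[R] K, f = 0 := by
  obtain ⟨d, hd⟩ := hC.exists_hom_forall_disjoint (A := A)
  have := hA d
  obtain ⟨r, hr⟩ := exists_leftInverse_of_injective (LinearMap.range d).injective_subtype
  have hcompl : IsCompl (LinearMap.range d) (LinearMap.ker r) :=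
    LinearMap.isCompl_of_proj fun x ↦ LinearMap.congr_fun hr x
  refine ⟨d, LinearMap.ker r, hcompl, fun f ↦ ?_⟩
  have hf : (LinearMap.ker r).subtype ∘ₗ f = 0 := hd _ <| hcompl.disjoint.mono_right <|
    (LinearMap.range_comp_le_range f _).trans (Submodule.range_subtype _).le
  exact LinearMap.ext fun a ↦ Subtype.ext (LinearMap.congr_fun hf a)

theorem QuotientsAutInvariant.isSemisimpleModule_range (h : QuotientsAutInvariant R R)
    {p q : R →ₗ[R] R} (hpq : IsMatrixUnitPair p q) :
    IsSemisimpleModule R (LinearMap.range p) := by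
  have : Module.Projective R (LinearMap.range p) :=
    Module.Projective.of_split (LinearMap.range p).subtype (p.rangeRestrict ∘ₗ q) (by
      ext ⟨_, x, rfl⟩
      simp [hpq.left_right_left])
  have hgen : Submodule.span R {p.rangeRestrict 1} = ⊤ := by
    refine Submodule.eq_top_iff'.2 ?_
    rintro ⟨_, x, rfl⟩
    refine Submodule.mem_span_singleton.2 ⟨x, Subtype.ext ?_⟩
    simp [← map_smul]
  exact isSemisimpleModule_of_injective_quotients hgen
    (fun N ↦ h.injective_of_surjective hpq N.mkQ N.mkQ_surjective)
    fun _ hN ↦ h.exists_injective_le hpq hN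

theorem IsMatrixUnitPair.isCompl {p q : M →ₗ[R] M} (hpq : IsMatrixUnitPair p q) :
    IsCompl (LinearMap.range p ⊔ LinearMap.range (q ∘ₗ p)) (LinearMap.ker p ⊓ LinearMap.ker q) := by
  constructor
  · rw [Submodule.disjoint_def]
    rintro x hx ⟨hpx, hqx⟩
    obtain ⟨_, ⟨a, rfl⟩, _, ⟨b, rfl⟩, rfl⟩ := Submodule.mem_sup.1 hx
    simp only [SetLike.mem_coe, LinearMap.mem_ker, map_add, LinearMap.comp_apply, hpq.left_sq,
      hpq.right_sq, hpq.left_right_left, zero_add, add_zero] at hpx hqx ⊢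
    rw [hpx, ← hpq.left_right_left a, hqx, map_zero, map_zero, add_zero]
  · refine codisjoint_iff.2 (Submodule.eq_top_iff'.2 fun x ↦ Submodule.mem_sup.2
      ⟨p (q x) + q (p x), Submodule.add_mem_sup ⟨q x, rfl⟩ ⟨x, rfl⟩,
        x - (p (q x) + q (p x)), ?_, ?_⟩)
    · constructor <;>
        simp [hpq.left_sq, hpq.right_sq, hpq.left_right_left, hpq.right_left_right]
    · abel

theorem QuotientsAutInvariant.exists_isCompl (h : QuotientsAutInvariant R R) :
    ∃ X N : Submodule R R, IsCompl X N ∧ IsSemisimpleModule R X ∧ (∀ f : X →ₗ[R] N, f = 0) ∧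
      (∀ f : N →ₗ[R] X, f = 0) ∧ SquareFreeMod R N := by
  obtain ⟨p, q, hpq, hC⟩ := h.autInvariant.exists_isMatrixUnitPair_squareFreeMod
  have := h.isSemisimpleModule_range hpq
  have : Module.Finite R (LinearMap.range p) :=
    Module.Finite.of_surjective p.rangeRestrict p.surjective_rangeRestrict
  have hpqC := hpq.isCompl
  rw [LinearMap.range_comp] at hpqC
  generalize LinearMap.ker p ⊓ LinearMap.ker q = C at hC hpqC
  obtain ⟨d, K, hdK, hK⟩ := hC.exists_isCompl_range (A := LinearMap.range p) fun d ↦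
    h.injective_of_surjective hpq d.rangeRestrict d.surjective_rangeRestrict
  let N : Submodule R R := K.map C.subtype
  let e : N ≃ₗ[R] K := (C.equivSubtypeMap K).symm
  let m := ((LinearMap.range p).subtype.coprod (q ∘ₗ (LinearMap.range p).subtype)).coprod
    (C.subtype ∘ₗ d)
  have hcompl : IsCompl (LinearMap.range m) N := by
    have hC_eq : (LinearMap.range d).map C.subtype ⊔ N = C := by
      rw [← Submodule.map_sup, hdK.sup_eq_top, Submodule.map_subtype_top]
    simpa [m, LinearMap.range_coprod, LinearMap.range_comp] using
      isCompl_sup_of_disjoint (hC_eq.symm ▸ hpqC)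
        (Submodule.disjoint_map C.injective_subtype hdK.disjoint)
  have hAN (f : LinearMap.range p →ₗ[R] N) : f = 0 :=
    (LinearMap.cancel_left (f := e.toLinearMap) e.injective).1 <|
      (hK _).trans (LinearMap.comp_zero _).symm
  have hXN (f : LinearMap.range m →ₗ[R] N) : f = 0 := by
    have hfm : f ∘ₗ m.rangeRestrict = 0 :=
      LinearMap.prod_ext (LinearMap.prod_ext (by simp [hAN]) (by simp [hAN])) (by simp [hAN])
    exact (LinearMap.cancel_right m.surjective_rangeRestrict).1
      (hfm.trans (LinearMap.zero_comp _).symm)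
  have : IsSemisimpleModule R (LinearMap.range m) := by
    rw [LinearMap.range_coprod, LinearMap.range_coprod]
    exact .sup (.sup (.range _) (.range _)) (.range _)
  have := projective_of_isCompl hcompl
  exact ⟨_, N, hcompl, inferInstance, hXN, hom_eq_zero_of_symm hXN,
    hC.of_injective (K.subtype ∘ₗ e.toLinearMap) (K.injective_subtype.comp e.injective)⟩

end Splitting

/-! ### Square-free modules -/

section SquareFree

variable {R : Type u} [Ring R] {M U : Type u} [AddCommGroup M] [Module R M] [AddCommGroup U]
  [Module R U]

theorem SquareFreeMod.eq_bot (hM : SquareFreeMod R M) {L : Submodule R M} (f g : M →ₗ[R] M)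
    (h : ∀ a ∈ L, ∀ b ∈ L, f a = g b → a = 0 ∧ b = 0) : L = ⊥ := by
  have : Subsingleton L := squareFreeMod_iff.1 hM L (f ∘ₗ L.subtype) (-g ∘ₗ L.subtype)
    (injective_coprod_iff.2 fun a b hab ↦ by
      simpa using h a a.2 b b.2 (add_neg_eq_zero.1 hab))
  exact Submodule.eq_bot_of_subsingleton

theorem SquareFreeMod.disjoint_ker_comp_self (hM : SquareFreeMod R M) {t : M →ₗ[R] M}
    {L : Submodule R M} (hL : Disjoint (LinearMap.ker t) L) :
    Disjoint L (LinearMap.ker (t ∘ₗ t)) := by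
  have ht {l : M} (hl : l ∈ L) (htl : t l = 0) : l = 0 := Submodule.disjoint_def.1 hL l htl hl
  refine disjoint_iff.2 (hM.eq_bot LinearMap.id t ?_)
  rintro a ⟨haL, -⟩ b ⟨hbL, hb⟩ (rfl : a = t b)
  exact ⟨ht haL hb, ht hbL (ht haL hb)⟩

theorem SquareFreeMod.essentialSub_ker_sup_map (hM : SquareFreeMod R M) {t : M →ₗ[R] M}
    {L : Submodule R M} (hL : Maximal (Disjoint (LinearMap.ker t)) L) :
    EssentialSub (LinearMap.ker t ⊔ L.map t) := by
  intro W hW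
  have hWdisj {x : M} (hx : x ∈ W) (hx' : x ∈ LinearMap.ker t ⊔ L.map t) : x = 0 :=
    Submodule.disjoint_def.1 (disjoint_iff.2 hW) x hx hx'
  have ht {x : M} (hx : x ∈ W) (htx : t x = 0) : x = 0 :=
    hWdisj hx (Submodule.mem_sup_left htx)
  refine essentialSub_sup_of_maximal_disjoint hL W (hM.eq_bot LinearMap.id t ?_)
  rintro a ⟨haW, -⟩ b ⟨hbW, hb⟩ (rfl : a = t b)
  obtain ⟨k, hk, l, hl, rfl⟩ := Submodule.mem_sup.1 hb
  have htkl : t (k + l) = t l := by rw [map_add, LinearMap.mem_ker.1 hk, zero_add]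
  have htb : t (k + l) = 0 := hWdisj haW (Submodule.mem_sup_right ⟨l, hl, htkl.symm⟩)
  exact ⟨htb, ht hbW htb⟩

/-- `f` and `g` agree on an essential submodule; equivalently, their extensions to the injective
hull are congruent modulo the Jacobson radical of its endomorphism ring. -/
def EssEq (f g : M →ₗ[R] M) : Prop :=
  EssentialSub (LinearMap.eqLocus f g)

theorem AutInvariant.exists_linearEquiv_comp (hM : AutInvariant R M) (hsf : SquareFreeMod R M)
    (t : M →ₗ[R] M) :
    ∃ (u : M ≃ₗ[R] M) (p : M →ₗ[R] M), t = u.toLinearMap ∘ₗ p ∧ EssEq (p ∘ₗ p) p := by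
  obtain ⟨L, -, hL⟩ := exists_maximal_disjoint (disjoint_bot_right (a := LinearMap.ker t))
  have hLess := essentialSub_sup_of_maximal_disjoint hL
  obtain ⟨u, hu⟩ := hM.exists_linearEquiv (k := (LinearMap.ker t).subtype.coprod L.subtype)
    (φ := (LinearMap.ker t).subtype.coprod (t ∘ₗ L.subtype))
    (injective_coprod_iff.2 fun a l hal ↦ by
      have htl : t l = 0 := by simpa using congrArg t hal
      have hl : l = 0 := Subtype.ext (Submodule.disjoint_def.1 hL.1 l htl l.2)
      exact ⟨by simpa [hl] using hal, hl⟩)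
    (injective_coprod_iff.2 fun a l hal ↦ by
      have htl : t (t l) = 0 := by simpa using congrArg t hal
      have hl : l = 0 :=
        Subtype.ext (Submodule.disjoint_def.1 (hsf.disjoint_ker_comp_self hL.1) l l.2 htl)
      exact ⟨by simpa [hl] using hal, hl⟩)
    (by simpa only [LinearMap.range_coprod, Submodule.range_subtype] using hLess)
    (by simpa only [LinearMap.range_coprod, LinearMap.range_comp, Submodule.range_subtype] using
      hsf.essentialSub_ker_sup_map hL)
  have hu_apply (l : M) (hl : l ∈ L) : u l = t l := by
    simpa using LinearMap.congr_fun hu (0, ⟨l, hl⟩)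
  refine ⟨u, u.symm.toLinearMap ∘ₗ t, by ext; simp, hLess.mono (sup_le (fun x hx ↦ ?_) ?_)⟩
  · simp [LinearMap.mem_ker.1 hx]
  · intro x hx
    simp [← hu_apply x hx]

theorem SquareFreeMod.essentialSub_ker_comp_comp_id_sub (hM : SquareFreeMod R M) {p : M →ₗ[R] M}
    (hp : EssEq (p ∘ₗ p) p) (r : M →ₗ[R] M) :
    EssentialSub (LinearMap.ker (p ∘ₗ r ∘ₗ (LinearMap.id - p))) := by
  let f := r ∘ₗ (LinearMap.id - p)
  intro L hL
  have hLf {x : M} (hx : x ∈ L) (hpfx : p (f x) = 0) : x = 0 :=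
    Submodule.disjoint_def.1 (disjoint_iff.2 hL) x hx hpfx
  refine (hp.inf (hp.comap f)) L (hM.eq_bot (LinearMap.id - p) (p ∘ₗ f) ?_)
  rintro a ⟨haL, ha, -⟩ b ⟨hbL, -, hb⟩ hab
  have hpa : p (p a) = p a := ha
  have hpb : p (p (f b)) = p (f b) := hb
  have hab' : a - p a = p (f b) := hab
  have hpfb : p (f b) = 0 := by rw [← hpb, ← hab', map_sub, hpa, sub_self]
  have hfa : f a = 0 := (congrArg r (hab'.trans hpfb)).trans (map_zero r)
  exact ⟨hLf haL (by rw [hfa, map_zero]), hLf hbL hpfb⟩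

theorem SquareFreeMod.essEq_comp_comm (hM : SquareFreeMod R M) {p : M →ₗ[R] M}
    (hp : EssEq (p ∘ₗ p) p) (r : M →ₗ[R] M) : EssEq (p ∘ₗ r) (r ∘ₗ p) := by
  have hp' : EssEq ((LinearMap.id - p) ∘ₗ (LinearMap.id - p)) (LinearMap.id - p) :=
    EssentialSub.mono hp fun x (hx : p (p x) = p x) ↦ by simp [hx]
  refine ((hM.essentialSub_ker_comp_comp_id_sub hp r).inf
    (hM.essentialSub_ker_comp_comp_id_sub hp' r)).mono ?_
  rintro x ⟨hx, hx'⟩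
  have hprx : p (r x) = p (r (p x)) := sub_eq_zero.1 (by simpa using hx)
  have hrpx : r (p x) = p (r (p x)) := sub_eq_zero.1 (by simpa using hx')
  exact hprx.trans hrpx.symm

theorem AutInvariant.comp_eq_of_essEq [Module.Projective R M] [IsSimpleModule R U]
    (hM : AutInvariant R M) {f g : M →ₗ[R] M} (hfg : EssEq f g) (β : M →ₗ[R] U) :
    β ∘ₗ f = β ∘ₗ g := by
  by_contra hne
  have hne' : β ∘ₗ (f - g) ≠ 0 := by rwa [LinearMap.comp_sub, sub_ne_zero]
  obtain ⟨y, hy⟩ := Module.projective_lifting_property (β ∘ₗ (f - g)) β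
    (LinearMap.surjective_of_ne_zero hne')
  let s : M →ₗ[R] M := LinearMap.id - (f - g) ∘ₗ y
  have hs : ∀ x ∈ (LinearMap.eqLocus f g).comap y, s x = x := fun x (hx : f (y x) = g (y x)) ↦ by
    simp [s, hx]
  have hess : EssentialSub ((LinearMap.eqLocus f g).comap y) := EssentialSub.comap hfg y
  obtain ⟨ψ, hψ⟩ := hM.exists_linearEquiv Function.injective_id
    (k := LinearMap.id) (φ := s)
    (hess.injective (Submodule.disjoint_def.2 fun x hx hsx ↦ (hs x hx).symm.trans hsx))
    (by simpa using essentialSub_top) (hess.mono fun x hx ↦ ⟨x, hs x hx⟩)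
  have hβs : β ∘ₗ s = 0 := by rw [LinearMap.comp_sub, ← LinearMap.comp_assoc, hy]; simp
  have hs_surj : Function.Surjective s := by
    rw [← hψ]
    exact ψ.surjective
  have hβ : β = 0 := (LinearMap.cancel_right hs_surj).1 (hβs.trans (LinearMap.zero_comp s).symm)
  exact hne (by simp [hβ])

theorem AutInvariant.not_surjective_prod [Module.Projective R M] [IsSimpleModule R U]
    (hM : AutInvariant R M) (hsf : SquareFreeMod R M) (α β : M →ₗ[R] U) :
    ¬ Function.Surjective (α.prod β) := by
  intro hαβ
  have hα : Function.Surjective α := Prod.fst_surjective.comp hαβ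
  have hβ : Function.Surjective β := Prod.snd_surjective.comp hαβ
  obtain ⟨t, ht⟩ := Module.projective_lifting_property (α.prod β) ((0 : M →ₗ[R] U).prod β) hαβ
  obtain ⟨b, hb⟩ := Module.projective_lifting_property α β hα
  have hαt (x : M) : α (t x) = 0 := congrArg Prod.fst (LinearMap.congr_fun ht x)
  have hβt (x : M) : β (t x) = β x := congrArg Prod.snd (LinearMap.congr_fun ht x)
  have hαb (x : M) : α (b x) = β x := LinearMap.congr_fun hb x
  obtain ⟨u, p, rfl, hp⟩ := hM.exists_linearEquiv_comp hsf t
  have hcomm (γ : M →ₗ[R] U) (r : M →ₗ[R] M) (x : M) : γ (p (r x)) = γ (r (p x)) :=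
    LinearMap.congr_fun (hM.comp_eq_of_essEq (hsf.essEq_comp_comm hp r) γ) x
  have hαp (x : M) : α (p x) = 0 := by
    obtain ⟨z, rfl⟩ := u.surjective x
    exact (hcomm α u.toLinearMap z).trans (hαt z)
  have hβp (x : M) : β (p x) = 0 := by rw [← hαb, ← hcomm, hαp]
  have hβ_zero (x : M) : β x = 0 := by
    rw [← hβt]
    exact (hcomm β u.toLinearMap x).symm.trans (hβp _)
  have := IsSimpleModule.nontrivial R U
  obtain ⟨y, hy⟩ := exists_ne (0 : U)
  obtain ⟨x, rfl⟩ := hβ y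
  exact hy (hβ_zero x)

theorem IsMatrixUnitPair.exists_surjective_prod [Module.Finite R M] {p q : M →ₗ[R] M}
    (hpq : IsMatrixUnitPair p q) (hp : p ≠ 0) :
    ∃ (U : Type u) (_ : AddCommGroup U) (_ : Module R U) (α β : M →ₗ[R] U),
      IsSimpleModule R U ∧ Function.Surjective (α.prod β) := by
  have : Nontrivial (LinearMap.range p) :=
    Submodule.nontrivial_iff_ne_bot.2 (mt LinearMap.range_eq_bot.1 hp)
  have : Module.Finite R (LinearMap.range p) :=
    Module.Finite.of_surjective p.rangeRestrict p.surjective_rangeRestrict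
  obtain ⟨m, hm⟩ := IsCoatomic.exists_coatom (Submodule R (LinearMap.range p))
  refine ⟨LinearMap.range p ⧸ m, inferInstance, inferInstance, m.mkQ ∘ₗ p.rangeRestrict ∘ₗ q,
    m.mkQ ∘ₗ p.rangeRestrict, isSimpleModule_iff_isCoatom.2 hm, ?_⟩
  rintro ⟨y, z⟩
  obtain ⟨⟨_, y, rfl⟩, rfl⟩ := m.mkQ_surjective y
  obtain ⟨⟨_, z, rfl⟩, rfl⟩ := m.mkQ_surjective z
  refine ⟨p y + q (p z), Prod.ext (congrArg m.mkQ (Subtype.ext ?_))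
    (congrArg m.mkQ (Subtype.ext ?_))⟩
  · simp [hpq.right_sq, hpq.left_right_left]
  · simp [hpq.left_sq, hpq.left_right_left]

theorem exists_injective_coprod_quotient {X Y : Submodule R M} (hXY : Disjoint X Y)
    (f : X →ₗ[R] Y) :
    ∃ (K : Submodule R M) (g h : (X ⧸ LinearMap.ker f) →ₗ[R] M ⧸ K),
      Function.Injective (g.coprod h) := by
  let K : Submodule R M := (LinearMap.ker f).map X.subtype
  have hK (x : X) : (x : M) ∈ K ↔ f x = 0 := by simp [K]
  refine ⟨K, (LinearMap.ker f).mapQ K X.subtype (Submodule.map_le_iff_le_comap.1 le_rfl),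
    (LinearMap.ker f).liftQ (K.mkQ ∘ₗ Y.subtype ∘ₗ f) (fun x hx ↦ by simp [LinearMap.mem_ker.1 hx]),
    injective_coprod_iff.2 fun a b hab ↦ ?_⟩
  obtain ⟨x, rfl⟩ := (LinearMap.ker f).mkQ_surjective a
  obtain ⟨y, rfl⟩ := (LinearMap.ker f).mkQ_surjective b
  have hxy : (x + f y : M) ∈ K := (Submodule.Quotient.mk_eq_zero K).1 hab
  have hfyX : (f y : M) ∈ X :=
    (Submodule.add_mem_iff_right X x.2).1 (Submodule.map_subtype_le X _ hxy)
  have hfy : (f y : M) = 0 := Submodule.disjoint_def.1 hXY _ hfyX (f y).2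
  rw [hfy, add_zero, hK] at hxy
  exact ⟨(Submodule.Quotient.mk_eq_zero _).2 hxy,
    (Submodule.Quotient.mk_eq_zero _).2 (Subtype.ext hfy)⟩

/-- There are no nonzero homomorphisms between submodules of `M` with zero intersection. -/
def DisjointHomTrivial (R : Type u) [Ring R] (M : Type v) [AddCommGroup M] [Module R M] : Prop :=
  ∀ X Y : Submodule R M, Disjoint X Y → ∀ f : X →ₗ[R] Y, f = 0

theorem QuotientsAutInvariant.disjointHomTrivial [Module.Projective R M] [Module.Finite R M]
    (h : QuotientsAutInvariant R M) (hsf : SquareFreeMod R M) : DisjointHomTrivial R M := by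
  intro X Y hXY f
  obtain ⟨K, g₁, g₂, hg⟩ := exists_injective_coprod_quotient hXY f
  obtain ⟨p, q, hpq, -, hpg⟩ := (h _ K.mkQ K.mkQ_surjective).exists_isMatrixUnitPair g₁ g₂ hg
  have hp : p = 0 := by
    by_contra hp
    obtain ⟨U, _, _, α, β, _, hαβ⟩ := hpq.exists_surjective_prod hp
    exact h.autInvariant.not_surjective_prod hsf (α ∘ₗ K.mkQ) (β ∘ₗ K.mkQ)
      (hαβ.comp K.mkQ_surjective)
  ext x
  have hg₁ (a) : g₁ a = 0 := by rw [← hpg, hp]; rfl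
  have hx : (LinearMap.ker f).mkQ x = 0 :=
    (injective_coprod_iff.1 hg _ 0 (by rw [hg₁, map_zero, add_zero])).1
  exact congrArg Subtype.val (LinearMap.mem_ker.1 ((Submodule.Quotient.mk_eq_zero _).1 hx))

end SquareFree

/-! ### Ring decompositions -/

section Ring

open MulOpposite

theorem disjointHomTrivial_iff {R : Type u} [Ring R] {M : Type v} [AddCommGroup M] [Module R M] :
    DisjointHomTrivial R M ↔ ∀ x y : M, (∀ r s : R, r • x = s • y → r • x = 0) →
      (∀ r : R, r • x = 0 → r • y = 0) → y = 0 := by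
  refine ⟨fun h x y hxy hann ↦ ?_, fun h X Y hXY f ↦ ?_⟩
  · have hdisj : Disjoint (R ∙ x) (R ∙ y) := by
      refine Submodule.disjoint_def.2 fun z hzx hzy ↦ ?_
      obtain ⟨r, rfl⟩ := Submodule.mem_span_singleton.1 hzx
      obtain ⟨s, hs⟩ := Submodule.mem_span_singleton.1 hzy
      exact hxy r s hs.symm
    let φ : M →ₗ.[R] M := LinearPMap.mkSpanSingleton' x y hann
    have hφ : ∀ z : φ.domain, φ z ∈ R ∙ y := by
      rintro ⟨z, hz⟩
      obtain ⟨r, rfl⟩ := Submodule.mem_span_singleton.1 hz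
      rw [LinearPMap.mkSpanSingleton'_apply]
      exact Submodule.smul_mem _ r (Submodule.mem_span_singleton_self y)
    have hx : x ∈ φ.domain := Submodule.mem_span_singleton_self x
    have hzero := LinearMap.congr_fun (h _ _ hdisj (φ.toFun.codRestrict _ hφ)) ⟨x, hx⟩
    exact (LinearPMap.mkSpanSingleton'_apply_self x y hann hx).symm.trans
      (congrArg Subtype.val hzero)
  · refine LinearMap.ext fun x ↦ Subtype.ext (h x (f x) (fun r s hrs ↦ ?_) fun r hr ↦ ?_)
    · exact Submodule.disjoint_def.1 hXY _ (X.smul_mem r x.2) (hrs ▸ Y.smul_mem s (f x).2)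
    · have hrx : r • x = 0 := Subtype.ext hr
      rw [← Submodule.coe_smul, ← map_smul, hrx, map_zero, Submodule.coe_zero]

theorem DisjointHomTrivial.of_bijective {R S : Type*} [Ring R] [Ring S] {M M' : Type*}
    [AddCommGroup M] [Module R M] [AddCommGroup M'] [Module S M'] {σ : R →+* S}
    (h : DisjointHomTrivial R M) (θ : M →ₛₗ[σ] M')
    (hθ : Function.Bijective θ) : DisjointHomTrivial S M' := by
  have hθ_zero {x : M} : θ x = 0 ↔ x = 0 := map_eq_zero_iff θ hθ.injective
  rw [disjointHomTrivial_iff] at h ⊢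
  intro x' y' hxy hann
  obtain ⟨x, rfl⟩ := hθ.surjective x'
  obtain ⟨y, rfl⟩ := hθ.surjective y'
  refine hθ_zero.2 (h x y (fun r s hrs ↦ ?_) fun r hr ↦ ?_)
  · rw [← hθ_zero, map_smulₛₗ]
    exact hxy (σ r) (σ s) (by rw [← map_smulₛₗ, hrs, map_smulₛₗ])
  · rw [← hθ_zero, map_smulₛₗ]
    exact hann (σ r) (by rw [← map_smulₛₗ, hr, map_zero])

theorem DisjointHomTrivial.squareFreeMod {R : Type u} [Ring R] {M : Type v} [AddCommGroup M]
    [Module R M] (h : DisjointHomTrivial R M) : SquareFreeMod R M := by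
  rintro A B hAB ⟨φ⟩
  have hφ : φ.toLinearMap = 0 := h A B (disjoint_iff.2 hAB) _
  refine (Submodule.eq_bot_iff A).2 fun x hx ↦ ?_
  have hφx : φ ⟨x, hx⟩ = 0 := LinearMap.congr_fun hφ ⟨x, hx⟩
  exact congrArg Subtype.val (φ.map_eq_zero_iff.1 hφx)

variable {A : Type u} [Ring A]

theorem DisjointHomTrivial.mul_mul_one_sub_eq_zero (h : DisjointHomTrivial A A) {t : A}
    (ht : IsIdempotentElem t) (s : A) : t * s * (1 - t) = 0 := by
  refine disjointHomTrivial_iff.1 h t _ (fun r r' hr ↦ ?_) fun r hr ↦ ?_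
  · have hrt : r * t = r' * (t * s * (1 - t)) := hr
    calc r * t = r * t * t := by rw [mul_assoc, ht.eq]
      _ = r' * (t * s) * ((1 - t) * t) := by rw [hrt]; noncomm_ring
      _ = 0 := by rw [ht.one_sub_mul_self, mul_zero]
  · have hrt : r * t = 0 := hr
    rw [smul_eq_mul, ← mul_assoc, ← mul_assoc, hrt, zero_mul, zero_mul]

theorem DisjointHomTrivial.commute_of_isIdempotentElem (h : DisjointHomTrivial A A) {t : A}
    (ht : IsIdempotentElem t) (s : A) : Commute t s := by
  have hts := h.mul_mul_one_sub_eq_zero ht s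
  have hst := h.mul_mul_one_sub_eq_zero ht.one_sub s
  rw [mul_sub, mul_one, sub_eq_zero] at hts
  rw [sub_sub_cancel, sub_mul, sub_mul, one_mul, sub_eq_zero] at hst
  exact hts.trans hst.symm

theorem isTwoSided_of_forall_hom_eq_zero {X N : Ideal A} (hXN : IsCompl X N)
    (h : ∀ f : X →ₗ[A] N, f = 0) : X.IsTwoSided where
  mul_mem_of_left {a} b ha := by
    let f : X →ₗ[A] N :=
      N.projectionOnto X hXN.symm ∘ₗ LinearMap.toSpanSingleton A A b ∘ₗ X.subtype
    have hf : f ⟨a, ha⟩ = 0 := LinearMap.congr_fun (h f) _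
    exact (Submodule.projectionOnto_apply_eq_zero_iff hXN.symm).1 hf

theorem bijective_mk_domRestrict {X N : Ideal A} [N.IsTwoSided] (h : IsCompl X N) :
    Function.Bijective ((Ideal.Quotient.mk N).toSemilinearMap.domRestrict X) :=
  (Submodule.quotientEquivOfIsCompl N X h.symm).symm.bijective

theorem bijective_prod_mk {X N : Ideal A} [X.IsTwoSided] [N.IsTwoSided] (h : IsCompl X N) :
    Function.Bijective ((Ideal.Quotient.mk N).prod (Ideal.Quotient.mk X)) := by
  constructor
  · refine (injective_iff_map_eq_zero _).2 fun a ha ↦ ?_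
    exact Submodule.disjoint_def.1 h.disjoint a
      (Ideal.Quotient.eq_zero_iff_mem.1 (congrArg Prod.snd ha))
      (Ideal.Quotient.eq_zero_iff_mem.1 (congrArg Prod.fst ha))
  · rintro ⟨a, b⟩
    obtain ⟨⟨x, hx⟩, rfl⟩ := (bijective_mk_domRestrict h).surjective a
    obtain ⟨⟨n, hn⟩, rfl⟩ := (bijective_mk_domRestrict h.symm).surjective b
    refine ⟨x + n, Prod.ext ?_ ?_⟩
    · simp [Ideal.Quotient.eq_zero_iff_mem.2 hn]
    · simp [Ideal.Quotient.eq_zero_iff_mem.2 hx]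

theorem quotientsAutInvariant_self
    (h : ∀ (M : Type u) [AddCommGroup M] [Module A M],
      (∃ m : M, Submodule.span A {m} = ⊤) → AutInvariant A M) :
    QuotientsAutInvariant A A := by
  intro Q _ _ s hs
  refine h Q ⟨s 1, ?_⟩
  rw [← Set.image_singleton, Submodule.span_image, ← Ideal.span, Ideal.span_singleton_one,
    Submodule.map_top, LinearMap.range_eq_top.2 hs]

theorem QuotientsAutInvariant.exists_ringEquiv_prod (h : QuotientsAutInvariant A A) :
    ∃ (S T : Type u) (_ : Ring S) (_ : Ring T),
      Nonempty (A ≃+* S × T) ∧ IsSemisimpleRing S ∧ DisjointHomTrivial T T := by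
  obtain ⟨X, N, hXN, hX, hhomXN, hhomNX, hsf⟩ := h.exists_isCompl
  have := isTwoSided_of_forall_hom_eq_zero hXN hhomXN
  have := isTwoSided_of_forall_hom_eq_zero hXN.symm hhomNX
  have := projective_of_isCompl hXN.symm
  have hproj : Function.Surjective (N.projectionOnto X hXN.symm) :=
    Submodule.projectionOnto_surjective hXN.symm
  have : Module.Finite A N := Module.Finite.of_surjective _ hproj
  exact ⟨A ⧸ N, A ⧸ X, inferInstance, inferInstance,
    ⟨RingEquiv.ofBijective _ (bijective_prod_mk hXN)⟩,
    (LinearMap.isSemisimpleModule_iff_of_bijective _ (bijective_mk_domRestrict hXN)).1 hX,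
    ((h.of_surjective _ hproj).disjointHomTrivial hsf).of_bijective _
      (bijective_mk_domRestrict hXN.symm)⟩

/-- The opposite of a product ring is the product of the opposite rings. -/
def mulOppositeProdRingEquiv (S T : Type*) [Ring S] [Ring T] : (S × T)ᵐᵒᵖ ≃+* Sᵐᵒᵖ × Tᵐᵒᵖ where
  toFun x := (op x.unop.1, op x.unop.2)
  invFun x := op (x.1.unop, x.2.unop)
  map_mul' _ _ := rfl
  map_add' _ _ := rfl

theorem DisjointHomTrivial.mulOpposite (h : DisjointHomTrivial A A) :
    DisjointHomTrivial Aᵐᵒᵖᵐᵒᵖ Aᵐᵒᵖ :=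
  h.of_bijective (σ := RingEquiv.opOp A)
    { toFun := op
      map_add' := op_add
      map_smul' := fun _ _ ↦ rfl } opEquiv.bijective

end Ring

theorem cyclics_autInvariant_structure_general {R : Type u} [Ring R]
    (hcyc : ∀ (M : Type u) [AddCommGroup M] [Module Rᵐᵒᵖ M],
      (∃ m : M, Submodule.span Rᵐᵒᵖ {m} = ⊤) → AutInvariant Rᵐᵒᵖ M) :
    ∃ (S T : Type u) (_ : Ring S) (_ : Ring T),
      Nonempty (R ≃+* S × T) ∧ IsSemisimpleRing S ∧ SquareFreeMod Tᵐᵒᵖ T ∧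
      (∀ X Y : Submodule Tᵐᵒᵖ T, X ⊓ Y = ⊥ → ∀ f : X →ₗ[Tᵐᵒᵖ] Y, f = 0) ∧
      ∀ t : T, IsIdempotentElem t → ∀ s : T, Commute t s := by
  obtain ⟨S, T, _, _, ⟨e⟩, hS, hT⟩ :=
    (quotientsAutInvariant_self hcyc).exists_ringEquiv_prod
  refine ⟨Sᵐᵒᵖ, Tᵐᵒᵖ, inferInstance, inferInstance,
    ⟨(RingEquiv.opOp R).trans (e.op.trans (mulOppositeProdRingEquiv S T))⟩,
    isSemisimpleRing_mulOpposite_iff.2 hS, hT.mulOpposite.squareFreeMod,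
    fun X Y hXY ↦ hT.mulOpposite X Y (disjoint_iff.2 hXY), fun t ht s ↦ ?_⟩
  exact (hT.commute_of_isIdempotentElem (congrArg MulOpposite.unop ht) s.unop).op

/-- if every cyclic right `R`-module is automorphism-invariant, then
`R ≅ S × T` with `S` semisimple artinian and `T` right square-free; moreover closed right
ideals of `T` with zero intersection admit only the zero homomorphism between them, and
all idempotents of `T` are central. -/
theorem cyclics_autInvariant_structure {R : Type u} [Ring R]
    (hcyc : ∀ (M : Type u) [AddCommGroup M] [Module Rᵐᵒᵖ M],
      (∃ m : M, Submodule.span Rᵐᵒᵖ {m} = ⊤) → AutInvariant Rᵐᵒᵖ M) :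
    ∃ (S T : Type u) (iS : Ring S) (iT : Ring T),
      (letI := iS; letI := iT; Nonempty (R ≃+* S × T)) ∧
      (letI := iS; IsSemisimpleRing S) ∧
      (letI := iT; SquareFreeMod Tᵐᵒᵖ T) ∧
      (letI := iT; ∀ X Y : Submodule Tᵐᵒᵖ T, ClosedSub X → ClosedSub Y → X ⊓ Y = ⊥ →
        ∀ f : ↥X →ₗ[Tᵐᵒᵖ] ↥Y, f = 0) ∧
      (letI := iT; ∀ t : T, t * t = t → ∀ s : T, t * s = s * t) := by
  obtain ⟨S, T, iS, iT, hR, hS, hsf, hhom, hidem⟩ := cyclics_autInvariant_structure_general hcyc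
  exact ⟨S, T, iS, iT, hR, hS, hsf, fun X Y _ _ ↦ hhom X Y, hidem⟩
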